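/- arXiv:0810.2570 — 2 statements merged into one kernel-verified Lean document; each statement's English description precedes it below -/
import Mathlib

section
/- Let n ≥ 1 and let Q and Q′ be real normal defining functions of dimension n, defining real analytic hypersurfaces M and M′ through 0 with complexifications ℳ and ℳ′. Assume M′ is of finite type at 0, i.e. (z,χ) ↦ Q′(z,χ,0) does not vanish identically on any neighborhood of 0. Let ℋ = (f,g,f̃,g̃) be an HSPM sending (ℳ,0) into (ℳ′,0). If ℋ is totally Segre nondegenerate at 0, then ℋ is Segre transversal to ℳ′ at 0, i.e. ∂g/∂w(0,0) ≠ 0. -/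
open Filter Topology Complex

namespace HSPMpaper

variable {n : ℕ}

/-- Partial derivative of `F` in the `i`-th coordinate direction. -/
noncomputable def pd (i : Fin n) (F : (Fin n → ℂ) → ℂ) : (Fin n → ℂ) → ℂ :=
  fun z => fderiv ℂ F z (Pi.single i 1)

/-- Iterated partial derivative `∂^α` for a multi-index `α`. -/
noncomputable def mpd (α : Fin n → ℕ) (F : (Fin n → ℂ) → ℂ) : (Fin n → ℂ) → ℂ :=
  ((List.ofFn fun i : Fin n => (pd i)^[α i]).foldr (· ∘ ·) id) F

/-- Componentwise complex conjugation on `ℂⁿ`. -/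
def conjV (z : Fin n → ℂ) : Fin n → ℂ := fun i => starRingEnd ℂ (z i)

/-- The conjugate defining function `Q̄(χ,z,τ) = conj (Q (conj χ) (conj z) (conj τ))`. -/
def QBar (Q : (Fin n → ℂ) → (Fin n → ℂ) → ℂ → ℂ) : (Fin n → ℂ) → (Fin n → ℂ) → ℂ → ℂ :=
  fun χ z τ => starRingEnd ℂ (Q (conjV χ) (conjV z) (starRingEnd ℂ τ))

/-- `Q` is a normal defining function (of dimension `n`): holomorphic near the origin of
`ℂⁿ × ℂⁿ × ℂ` and satisfying `Q(0,χ,τ) = τ` and `Q(z,0,τ) = τ` near `0`. -/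
def IsNormalDF (Q : (Fin n → ℂ) → (Fin n → ℂ) → ℂ → ℂ) : Prop :=
  (∀ᶠ p in 𝓝 (0 : (Fin n → ℂ) × (Fin n → ℂ) × ℂ),
      AnalyticAt ℂ (fun q : (Fin n → ℂ) × (Fin n → ℂ) × ℂ => Q q.1 q.2.1 q.2.2) p) ∧
  (∀ᶠ p in 𝓝 (0 : (Fin n → ℂ) × (Fin n → ℂ) × ℂ),
      Q 0 p.2.1 p.2.2 = p.2.2 ∧ Q p.1 0 p.2.2 = p.2.2)

/-- `Q` is a real normal defining function: normal and `Q(z,χ,Q̄(χ,z,w)) = w` near `0`. -/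
def IsRealNormalDF (Q : (Fin n → ℂ) → (Fin n → ℂ) → ℂ → ℂ) : Prop :=
  IsNormalDF Q ∧
  ∀ᶠ p in 𝓝 (0 : (Fin n → ℂ) × (Fin n → ℂ) × ℂ),
    Q p.1 p.2.1 (QBar Q p.2.1 p.1 p.2.2) = p.2.2

/-- `(f,g,f̃,g̃)` is a holomorphic Segre preserving map sending `(ℳ,0)` into `(ℳ',0)`. -/
def IsHSPM (Q Q' : (Fin n → ℂ) → (Fin n → ℂ) → ℂ → ℂ)
    (f : (Fin n → ℂ) → ℂ → Fin n → ℂ) (g : (Fin n → ℂ) → ℂ → ℂ)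
    (ft : (Fin n → ℂ) → ℂ → Fin n → ℂ) (gt : (Fin n → ℂ) → ℂ → ℂ) : Prop :=
  (∀ᶠ p in 𝓝 (0 : (Fin n → ℂ) × ℂ), AnalyticAt ℂ (fun q : (Fin n → ℂ) × ℂ => f q.1 q.2) p) ∧
  (∀ᶠ p in 𝓝 (0 : (Fin n → ℂ) × ℂ), AnalyticAt ℂ (fun q : (Fin n → ℂ) × ℂ => g q.1 q.2) p) ∧
  (∀ᶠ p in 𝓝 (0 : (Fin n → ℂ) × ℂ), AnalyticAt ℂ (fun q : (Fin n → ℂ) × ℂ => ft q.1 q.2) p) ∧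
  (∀ᶠ p in 𝓝 (0 : (Fin n → ℂ) × ℂ), AnalyticAt ℂ (fun q : (Fin n → ℂ) × ℂ => gt q.1 q.2) p) ∧
  f 0 0 = 0 ∧ g 0 0 = 0 ∧ ft 0 0 = 0 ∧ gt 0 0 = 0 ∧
  ∀ᶠ p in 𝓝 (0 : (Fin n → ℂ) × (Fin n → ℂ) × ℂ),
    g p.1 (Q p.1 p.2.1 p.2.2) =
      Q' (f p.1 (Q p.1 p.2.1 p.2.2)) (ft p.2.1 p.2.2) (gt p.2.1 p.2.2)

/-- `M` is of finite type at `0`: `(z,χ) ↦ Q(z,χ,0)` does not vanish identically near `0`. -/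
def FiniteType (Q : (Fin n → ℂ) → (Fin n → ℂ) → ℂ → ℂ) : Prop :=
  ¬ ∀ᶠ p in 𝓝 (0 : (Fin n → ℂ) × (Fin n → ℂ)), Q p.1 p.2 0 = 0

/-- Jacobian matrix of `z ↦ f(z,0)` at `z`. -/
noncomputable def jacz (f : (Fin n → ℂ) → ℂ → Fin n → ℂ) (z : Fin n → ℂ) :
    Matrix (Fin n) (Fin n) ℂ :=
  Matrix.of fun i j => pd j (fun z' => f z' 0 i) z

/-- `ℋ` is Segre transversal to `ℳ'` at `0`: `∂g/∂w(0,0) ≠ 0`. -/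
noncomputable def SegreTransversal (g : (Fin n → ℂ) → ℂ → ℂ) : Prop :=
  deriv (fun w => g 0 w) 0 ≠ 0

/-- `ℋ` is totally Segre nondegenerate at `0`. -/
def TotallySegreNondeg (f ft : (Fin n → ℂ) → ℂ → Fin n → ℂ) : Prop :=
  (¬ ∀ᶠ z in 𝓝 (0 : Fin n → ℂ), (jacz f z).det = 0) ∧
  (¬ ∀ᶠ χ in 𝓝 (0 : Fin n → ℂ), (jacz ft χ).det = 0)

/-- `ℋ` is transversally null: `g ≡ 0` and `g̃ ≡ 0` near `0`. -/
def TransversallyNull (g gt : (Fin n → ℂ) → ℂ → ℂ) : Prop :=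
  (∀ᶠ p in 𝓝 (0 : (Fin n → ℂ) × ℂ), g p.1 p.2 = 0) ∧
  (∀ᶠ p in 𝓝 (0 : (Fin n → ℂ) × ℂ), gt p.1 p.2 = 0)

/-- The `k`-th coordinate direction in `ℂⁿ × ℂ`. -/
noncomputable def dirCT (n : ℕ) (k : Fin (n + 1)) : (Fin n → ℂ) × ℂ :=
  if h : (k : ℕ) < n then (Pi.single ⟨k, h⟩ 1, 0) else (0, 1)

/-- `M` is holomorphically nondegenerate at `0`: for some `K`, the map
`(χ,τ) ↦ (∂_z^α Q(0,χ,τ))_{|α| ≤ K}` has generic rank `n+1`. -/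
def HolNondeg (Q : (Fin n → ℂ) → (Fin n → ℂ) → ℂ → ℂ) : Prop :=
  ∃ K : ℕ, ∃ A : Fin (n + 1) → Fin n → ℕ, (∀ j, (∑ i, A j i) ≤ K) ∧
    ¬ ∀ᶠ p in 𝓝 (0 : (Fin n → ℂ) × ℂ),
      (Matrix.of fun j k : Fin (n + 1) =>
        fderiv ℂ (fun q : (Fin n → ℂ) × ℂ => mpd (A j) (fun z => Q z q.1 q.2) 0) p
          (dirCT n k)).det = 0

/-- `M` is of class `𝒞` at `0`: for some `K`, the map
`χ ↦ (∂_z^α Q(0,χ,0))_{|α| ≤ K}` has generic rank `n`. -/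
def ClassC (Q : (Fin n → ℂ) → (Fin n → ℂ) → ℂ → ℂ) : Prop :=
  ∃ K : ℕ, ∃ A : Fin n → Fin n → ℕ, (∀ j, (∑ i, A j i) ≤ K) ∧
    ¬ ∀ᶠ χ in 𝓝 (0 : Fin n → ℂ),
      (Matrix.of fun j k : Fin n =>
        pd k (fun χ' => mpd (A j) (fun z => Q z χ' 0) 0) χ).det = 0

/-- `M` is finitely nondegenerate at `0`: for some `K`, the vectors
`∂_χ ∂_z^α Q(0,0,0)`, `|α| ≤ K`, span `ℂⁿ`. -/
def FinNondeg (Q : (Fin n → ℂ) → (Fin n → ℂ) → ℂ → ℂ) : Prop :=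
  ∃ K : ℕ, Submodule.span ℂ
    {v : Fin n → ℂ | ∃ α : Fin n → ℕ, (∑ i, α i) ≤ K ∧
      v = fun i => pd i (fun χ => mpd α (fun z => Q z χ 0) 0) 0} = ⊤

/-- Full Jacobian matrix of `(z,w) ↦ (f(z,w), g(z,w))` at `p ∈ ℂⁿ × ℂ`. -/
noncomputable def jacFull (f : (Fin n → ℂ) → ℂ → Fin n → ℂ) (g : (Fin n → ℂ) → ℂ → ℂ)
    (p : (Fin n → ℂ) × ℂ) : Matrix (Fin (n + 1)) (Fin (n + 1)) ℂ :=
  Matrix.of fun i k =>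
    fderiv ℂ (fun q : (Fin n → ℂ) × ℂ => (Fin.snoc (f q.1 q.2) (g q.1 q.2) : Fin (n + 1) → ℂ) i) p (dirCT n k)

/-- The degree-`d` homogeneous term of the Taylor series of `φ` at `0`. -/
noncomputable def homogTerm (d : ℕ) (φ : (Fin n → ℂ) → ℂ) : (Fin n → ℂ) → ℂ :=
  fun z => iteratedFDeriv ℂ d φ 0 (fun _ => z) / (d.factorial : ℂ)

/-- The order of vanishing of `φ` at `0`. -/
noncomputable def vanishOrder (φ : (Fin n → ℂ) → ℂ) : ℕ :=
  sInf {d | homogTerm d φ ≠ 0}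

/-!
Write `H = (f, g)`, `H̃ = (f̃, g̃)` and let `a = g_w - Q'_z f_w` along `ℳ`. Differentiating the
Segre preserving equation shows that `dH` and `dH̃` carry conormals of Segre varieties to each
other up to the factor `a`, whence `det dH = a · A` and `Q'_τ · det dH̃ = a · B` with holomorphic
`A` and `B`. So `a` can vanish only over the zeros of `det dH` and over those of `det dH̃`. Since
`a(0) = g_w(0)`, suppose that `a(0) = 0`. Zeros of a holomorphic function of `z` persist under
perturbation of parameters, while `a(·, χ, τ)` has no zeros for generic `(χ, τ)`; hence `a(z, 0,
0) = 0` for all `z`. The same argument in `χ`, at fixed `(z, w)`, gives `a = 0` at all points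
`(z, 0, χ, τ)` of `ℳ`, so `det dH̃` vanishes on the set of `(χ, τ)` with `Q(z, χ, τ) = 0` for
some `z`. Segre nondegeneracy pulls finite type back from `M'` to `M`, which makes this set have
interior points, and it also makes `det dH̃` generically nonzero: a contradiction.
-/

/-! ### Determinants -/

section Determinant

section LinearMap

variable {R M : Type*} [CommRing R] [AddCommGroup M] [Module R M] [Module.Free R M]
  [Module.Finite R M]

theorem det_prod_snd (G : M × R →ₗ[R] M) :
    (G.prod (LinearMap.snd R M R)).det = (G ∘ₗ LinearMap.inl R M R).det := by
  classical
  let b := Module.Free.chooseBasis R M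
  let u := Module.Basis.singleton Unit R
  have htriangular : LinearMap.toMatrix (b.prod u) (b.prod u) (G.prod (LinearMap.snd R M R)) =
      Matrix.fromBlocks (LinearMap.toMatrix b b (G ∘ₗ LinearMap.inl R M R))
        (LinearMap.toMatrix u b (G ∘ₗ LinearMap.inr R M R)) 0 1 := by
    ext (i | i) (j | j) <;> simp [LinearMap.toMatrix_apply, u]
  rw [← LinearMap.det_toMatrix (b.prod u), htriangular, Matrix.det_fromBlocks_zero₂₁,
    Matrix.det_one, mul_one, LinearMap.det_toMatrix]

theorem det_fst_prod (ℓ : M × R →ₗ[R] R) :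
    ((LinearMap.fst R M R).prod ℓ).det = ℓ (0, 1) := by
  classical
  let b := Module.Free.chooseBasis R M
  let u := Module.Basis.singleton Unit R
  have htriangular : LinearMap.toMatrix (b.prod u) (b.prod u) ((LinearMap.fst R M R).prod ℓ) =
      Matrix.fromBlocks 1 0 (LinearMap.toMatrix b u (ℓ ∘ₗ LinearMap.inl R M R))
        (LinearMap.toMatrix u u (ℓ ∘ₗ LinearMap.inr R M R)) := by
    ext (i | i) (j | j) <;> simp [LinearMap.toMatrix_apply, u, Matrix.one_apply,
      Finsupp.single_apply, eq_comm]
  rw [← LinearMap.det_toMatrix (b.prod u), htriangular, Matrix.det_fromBlocks_zero₁₂,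
    Matrix.det_one, one_mul, LinearMap.det_toMatrix, LinearMap.det_ring]
  rfl

theorem mul_det_eq_mul_det_of_comp_eq_smul {T : M × R →ₗ[R] M × R} {ℓ ℓ' : M × R →ₗ[R] R}
    {a : R} (h : ℓ' ∘ₗ T = a • ℓ) :
    ℓ' (0, 1) * T.det = a * ((LinearMap.fst R M R ∘ₗ T).prod ℓ).det := by
  have hfactor : (LinearMap.fst R M R).prod ℓ' ∘ₗ T =
      (LinearMap.id.prodMap (a • LinearMap.id)) ∘ₗ (LinearMap.fst R M R ∘ₗ T).prod ℓ :=
    LinearMap.ext fun v => Prod.ext rfl (LinearMap.congr_fun h v)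
  rw [← det_fst_prod ℓ', ← LinearMap.det_comp, hfactor, LinearMap.det_comp,
    LinearMap.det_prodMap]
  simp

end LinearMap

variable {V W : Type*} [NormedAddCommGroup V] [NormedSpace ℂ V] [NormedAddCommGroup W]
  [NormedSpace ℂ W]

theorem analyticAt_det [FiniteDimensional ℂ V] {L : W → V →L[ℂ] V} {x : W}
    (h : AnalyticAt ℂ L x) : AnalyticAt ℂ (fun y => (L y).det) x := by
  let b := Module.finBasis ℂ V
  have hdet : ∀ y, (L y).det = (LinearMap.toMatrix b b (L y : V →ₗ[ℂ] V)).det :=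
    fun y => (LinearMap.det_toMatrix b _).symm
  simp only [hdet, Matrix.det_apply', LinearMap.toMatrix_apply]
  refine Finset.analyticAt_fun_sum _ fun σ _ => analyticAt_const.mul
    (Finset.analyticAt_fun_prod _ fun i _ => ?_)
  let entry : (V →L[ℂ] V) →L[ℂ] ℂ := (LinearMap.toContinuousLinearMap (b.coord (σ i))) ∘L
    ContinuousLinearMap.apply ℂ V (b i)
  exact (entry.analyticAt (L x)).comp h

theorem range_eq_top_of_det_ne_zero [FiniteDimensional ℂ V] {L : V →L[ℂ] V} (h : L.det ≠ 0) :
    L.range = ⊤ :=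
  LinearMap.range_eq_top.2 (L.toContinuousLinearEquivOfDetNeZero h).surjective

end Determinant

/-! ### Germs of analytic functions -/

section Germ

variable {V W G : Type*} [NormedAddCommGroup V]
  [NormedSpace ℂ V] [NormedAddCommGroup W] [NormedSpace ℂ W] [NormedAddCommGroup G]
  [NormedSpace ℂ G]

theorem eventually_frequently_ne_zero [CompleteSpace G] {F : V → G} {x : V}
    (hF : AnalyticAt ℂ F x) (hne : ∃ᶠ y in 𝓝 x, F y ≠ 0) : ∀ᶠ y in 𝓝 x, ∃ᶠ y' in 𝓝 y, F y' ≠ 0 := by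
  obtain ⟨r, hr, hball⟩ := Metric.eventually_nhds_iff_ball.1 hF.eventually_analyticAt
  let _ : NormedSpace ℝ V := NormedSpace.restrictScalars ℝ ℂ V
  filter_upwards [Metric.ball_mem_nhds x hr] with y hy
  by_contra hzero
  simp only [Filter.not_frequently, not_not] at hzero
  have hF0 : Set.EqOn F 0 (Metric.ball x r) :=
    AnalyticOnNhd.eqOn_zero_of_preconnected_of_eventuallyEq_zero hball
      (convex_ball x r).isPreconnected hy hzero
  exact hne (Filter.eventually_of_mem (Metric.ball_mem_nhds x hr) fun z hz => not_not.2 (hF0 hz))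

theorem frequently_mul_ne_zero {a b : V → ℂ} {x : V} (ha : AnalyticAt ℂ a x)
    (hb : AnalyticAt ℂ b x) (ha0 : ∃ᶠ y in 𝓝 x, a y ≠ 0) (hb0 : ∃ᶠ y in 𝓝 x, b y ≠ 0) :
    ∃ᶠ y in 𝓝 x, a y * b y ≠ 0 := by
  refine frequently_frequently_nhds.1 ((hb0.and_eventually
    ((eventually_frequently_ne_zero ha ha0).and hb.eventually_analyticAt)).mono ?_)
  rintro y ⟨hby, hay, hanalytic⟩
  exact (hay.and_eventually (hanalytic.continuousAt.eventually_ne hby)).mono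
    fun z hz => mul_ne_zero hz.1 hz.2

theorem frequently_comp_ne_zero [CompleteSpace G] {X : Type*} [TopologicalSpace X] {k : V → G}
    {Φ : X → V} {x : X} (hΦ : ContinuousAt Φ x) (hopen : ∃ᶠ y in 𝓝 x, 𝓝 (Φ y) ≤ map Φ (𝓝 y))
    (hk : AnalyticAt ℂ k (Φ x)) (hne : ∃ᶠ y in 𝓝 (Φ x), k y ≠ 0) :
    ∃ᶠ y in 𝓝 x, k (Φ y) ≠ 0 := by
  refine frequently_frequently_nhds.1 ((hopen.and_eventually
    (hΦ.eventually (eventually_frequently_ne_zero hk hne))).mono ?_)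
  rintro y ⟨hopeny, hney⟩
  exact hney.filter_mono hopeny

theorem eventually_eq_of_fderiv_comp_inl_eq_zero {F : V × W → G}
    (hF : ∀ᶠ p in 𝓝 0, DifferentiableAt ℂ F p)
    (h0 : ∀ᶠ p in 𝓝 0, fderiv ℂ F p ∘L ContinuousLinearMap.inl ℂ V W = 0) :
    ∀ᶠ p in 𝓝 0, F p = F (0, p.2) := by
  obtain ⟨r, hr, hball⟩ := Metric.eventually_nhds_iff_ball.1 (hF.and h0)
  let _ : NormedSpace ℝ V := NormedSpace.restrictScalars ℝ ℂ V
  filter_upwards [Metric.ball_mem_nhds 0 hr] with p hp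
  rw [Prod.zero_eq_mk, ← ball_prod_same] at hp hball
  have hslice : ∀ v ∈ Metric.ball (0 : V) r,
      HasFDerivAt (fun v => F (v, p.2)) (0 : V →L[ℂ] G) v := by
    intro v hv
    have hFv := hball (v, p.2) ⟨hv, hp.2⟩
    rw [← hFv.2]
    exact hFv.1.hasFDerivAt.comp v (hasFDerivAt_prodMk_left v p.2)
  exact Metric.isOpen_ball.is_const_of_fderiv_eq_zero (convex_ball (0 : V) r).isPreconnected
    (fun v hv => (hslice v hv).differentiableAt.differentiableWithinAt)
    (fun v hv => (hslice v hv).fderiv) hp.1 (Metric.mem_ball_self hr)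

theorem frequently_fderiv_comp_inl_ne_zero [CompleteSpace G] {F : V × W → G}
    (hF : AnalyticAt ℂ F 0) (h0 : ∀ᶠ w in 𝓝 0, F (0, w) = 0) (hne : ∃ᶠ p in 𝓝 0, F p ≠ 0) :
    ∃ᶠ p in 𝓝 0, fderiv ℂ F p ∘L ContinuousLinearMap.inl ℂ V W ≠ 0 := by
  refine fun hzero => hne ?_
  filter_upwards [eventually_eq_of_fderiv_comp_inl_eq_zero
    (hF.eventually_analyticAt.mono fun p hp => hp.differentiableAt)
    (hzero.mono fun p hp => not_not.1 hp),
    (continuous_snd.tendsto' (0 : V × W) 0 rfl).eventually h0] with p hp hp0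
  exact not_not.2 (hp.trans hp0)

theorem frequently_nhds_le_map_of_det_ne_zero [FiniteDimensional ℂ V] {φ : V → V} {x : V}
    (hφ : AnalyticAt ℂ φ x) (hne : ∃ᶠ y in 𝓝 x, (fderiv ℂ φ y).det ≠ 0) :
    ∃ᶠ y in 𝓝 x, 𝓝 (φ y) ≤ map φ (𝓝 y) := by
  have : CompleteSpace V := FiniteDimensional.complete ℂ V
  refine (hne.and_eventually hφ.eventually_analyticAt).mono fun y hy => ?_
  exact (hy.2.hasStrictFDerivAt.map_nhds_eq_of_surj (range_eq_top_of_det_ne_zero hy.1)).ge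

theorem frequently_nhds_le_map_prodMap {X Y X' Y' : Type*} [TopologicalSpace X]
    [TopologicalSpace Y] [TopologicalSpace X'] [TopologicalSpace Y'] {φ : X → X'} {ψ : Y → Y'}
    {x : X} {y : Y} (hφ : ∃ᶠ a in 𝓝 x, 𝓝 (φ a) ≤ map φ (𝓝 a))
    (hψ : ∃ᶠ b in 𝓝 y, 𝓝 (ψ b) ≤ map ψ (𝓝 b)) :
    ∃ᶠ p in 𝓝 (x, y), 𝓝 (Prod.map φ ψ p) ≤ map (Prod.map φ ψ) (𝓝 p) := by
  rw [nhds_prod_eq]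
  refine (Filter.frequently_prod_and.2 ⟨hφ, hψ⟩).mono fun p hp => ?_
  rw [Prod.map_apply', nhds_prod_eq, nhds_prod_eq, ← Filter.prod_map_map_eq']
  exact Filter.prod_mono hp.1 hp.2

theorem map_snd_prodMk_nhds_eq [CompleteSpace V] [CompleteSpace W] [CompleteSpace G]
    {γ : V × W → G} {γ' : V × W →L[ℂ] G} {p : V × W} (hγ : HasStrictFDerivAt γ γ' p)
    (hsurj : (γ' ∘L ContinuousLinearMap.inl ℂ V W).range = ⊤) :
    map (fun p => (p.2, γ p)) (𝓝 p) = 𝓝 (p.2, γ p) := by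
  refine (hasStrictFDerivAt_snd.prodMk hγ).map_nhds_eq_of_surj (LinearMap.range_eq_top.2 ?_)
  rintro ⟨w, y⟩
  obtain ⟨v, hv⟩ := LinearMap.range_eq_top.1 hsurj (y - γ' (0, w))
  refine ⟨(v, w), Prod.ext rfl ?_⟩
  have hsplit : ((v, w) : V × W) = (v, 0) + (0, w) := by simp
  have hv' : γ' (v, 0) = y - γ' (0, w) := hv
  simp only [ContinuousLinearMap.coe_coe, ContinuousLinearMap.prod_apply]
  rw [hsplit, map_add, hv', sub_add_cancel]

theorem frequently_nhds_le_map_snd_prodMk [CompleteSpace V] [CompleteSpace W] [CompleteSpace G]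
    {γ : V × W → G} {x : V × W} (hγ : AnalyticAt ℂ γ x)
    (hsurj : ∃ᶠ p in 𝓝 x, (fderiv ℂ γ p ∘L ContinuousLinearMap.inl ℂ V W).range = ⊤) :
    ∃ᶠ p in 𝓝 x, 𝓝 (p.2, γ p) ≤ map (fun p => (p.2, γ p)) (𝓝 p) :=
  (hsurj.and_eventually hγ.eventually_analyticAt).mono fun _ hp =>
    (map_snd_prodMk_nhds_eq hp.2.hasStrictFDerivAt hp.1).ge

end Germ

/-! ### Persistence of zeros -/

section Hurwitz

theorem exists_mem_closedBall_eq_zero {f : ℂ → ℂ} {c : ℂ} {R m : ℝ} (hR : 0 < R)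
    (hf : DifferentiableOn ℂ f (Metric.closedBall c R))
    (hsphere : ∀ s ∈ Metric.sphere c R, m ≤ ‖f s‖) (hc : ‖f c‖ < m) :
    ∃ s ∈ Metric.closedBall c R, f s = 0 := by
  by_contra! hne
  have hm : 0 < m := (norm_nonneg _).trans_lt hc
  have hinv : DiffContOnCl ℂ (fun s => (f s)⁻¹) (Metric.ball c R) := by
    refine DifferentiableOn.diffContOnCl ?_
    rw [closure_ball c hR.ne']
    exact hf.inv hne
  have hmax : ‖(f c)⁻¹‖ ≤ m⁻¹ := by
    refine Complex.norm_le_of_forall_mem_frontier_norm_le Metric.isBounded_ball hinv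
      (fun s hs => ?_) (subset_closure (Metric.mem_ball_self hR))
    rw [frontier_ball c hR.ne'] at hs
    rw [norm_inv]
    exact inv_anti₀ hm (hsphere s hs)
  rw [norm_inv, inv_le_inv₀ (norm_pos_iff.2 (hne c (Metric.mem_closedBall_self hR.le))) hm] at hmax
  exact hmax.not_gt hc

theorem exists_closedBall_subset_sphere_ne_zero {f : ℂ → ℂ} {s₀ : ℂ} {U : Set ℂ} (hU : U ∈ 𝓝 s₀)
    (hne : ∀ᶠ s in 𝓝[≠] s₀, f s ≠ 0) :
    ∃ R > 0, Metric.closedBall s₀ R ⊆ U ∧ ∀ s ∈ Metric.sphere s₀ R, f s ≠ 0 := by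
  obtain ⟨R, hR, hball⟩ := Metric.nhds_basis_closedBall.mem_iff.1
    (inter_mem hU (eventually_nhdsWithin_iff.1 hne))
  exact ⟨R, hR, fun s hs => (hball hs).1, fun s hs =>
    (hball (Metric.sphere_subset_closedBall hs)).2 (Metric.ne_of_mem_sphere hs hR.ne')⟩

theorem eventually_exists_mem_eq_zero {X : Type*} [TopologicalSpace X] {F : X × ℂ → ℂ} {x₀ : X}
    {s₀ : ℂ} {U : Set ℂ} (hU : U ∈ 𝓝 s₀)
    (hd : ∀ᶠ x in 𝓝 x₀, DifferentiableOn ℂ (fun s => F (x, s)) U)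
    (hc : ∀ s ∈ U, ContinuousAt F (x₀, s)) (h0 : F (x₀, s₀) = 0)
    (hne : ∀ᶠ s in 𝓝[≠] s₀, F (x₀, s) ≠ 0) : ∀ᶠ x in 𝓝 x₀, ∃ s ∈ U, F (x, s) = 0 := by
  obtain ⟨R, hR, hRU, hsphere⟩ := exists_closedBall_subset_sphere_ne_zero hU hne
  have hcompact := isCompact_sphere s₀ R
  have hsphereU : Metric.sphere s₀ R ⊆ U := Metric.sphere_subset_closedBall.trans hRU
  obtain ⟨m, hm, hmin⟩ : ∃ m > 0, ∀ s ∈ Metric.sphere s₀ R, m ≤ ‖F (x₀, s)‖ :=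
    hcompact.exists_forall_le' (fun s hs => ((hc s (hsphereU hs)).comp
      (Continuous.prodMk_right x₀).continuousAt).norm.continuousWithinAt)
      fun s hs => norm_pos_iff.2 (hsphere s hs)
  have hlarge : ∀ᶠ x in 𝓝 x₀, ∀ s ∈ Metric.sphere s₀ R, m / 2 < ‖F (x, s)‖ :=
    hcompact.eventually_forall_of_forall_eventually fun s hs =>
      (hc s (hsphereU hs)).norm.eventually (lt_mem_nhds ((half_lt_self hm).trans_le (hmin s hs)))
  have hsmall : ∀ᶠ x in 𝓝 x₀, ‖F (x, s₀)‖ < m / 2 :=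
    ((hc s₀ (mem_of_mem_nhds hU)).comp (f := fun x => (x, s₀))
      (Continuous.prodMk_left s₀).continuousAt).norm.eventually
      (gt_mem_nhds (by simpa [h0] using hm))
  filter_upwards [hd, hlarge, hsmall] with x hdx hlargex hsmallx
  obtain ⟨s, hs, hs0⟩ := exists_mem_closedBall_eq_zero hR (hdx.mono hRU)
    (fun s hs => (hlargex s hs).le) hsmallx
  exact ⟨s, hRU hs, hs0⟩

variable {V W : Type*} [NormedAddCommGroup V] [NormedSpace ℂ V] [NormedAddCommGroup W]
  [NormedSpace ℂ W]

theorem isPreconnected_setOf_smul_mem_ball (w : W) (r : ℝ) :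
    IsPreconnected {s : ℂ | s • w ∈ Metric.ball (0 : W) r} := by
  let _ : NormedSpace ℝ W := NormedSpace.restrictScalars ℝ ℂ W
  exact ((convex_ball (0 : W) r).is_linear_preimage
    ((LinearMap.toSpanSingleton ℂ W w).restrictScalars ℝ).isLinear).isPreconnected

/-- Hurwitz's theorem along complex lines in `W`: an isolated zero of the slice `b (v, ·)` would
persist in nearby slices, among which those over points satisfying `P` have no zeros. -/
theorem eventually_eq_zero_of_frequently_ne_zero {b : V × W → ℂ} {P : V → Prop}
    (hb : AnalyticAt ℂ b 0) (hP : ∀ᶠ v in 𝓝 (0 : V), ∃ᶠ v' in 𝓝 v, P v')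
    (hne : ∀ᶠ x in 𝓝 (0 : V × W), P x.1 → b x ≠ 0) :
    ∀ᶠ x in 𝓝 (0 : V × W), b (x.1, 0) = 0 → b x = 0 := by
  obtain ⟨r, hr, hball⟩ := Metric.eventually_nhds_iff_ball.1 (hb.eventually_analyticAt.and hne)
  filter_upwards [Metric.ball_mem_nhds 0 hr,
    (continuous_fst.tendsto' (0 : V × W) 0 rfl).eventually hP] with ⟨v, w⟩ hvw hPv h0
  rw [Prod.zero_eq_mk, ← ball_prod_same] at hvw hball
  let S : Set ℂ := {s | s • w ∈ Metric.ball (0 : W) r}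
  have hS : IsOpen S := Metric.isOpen_ball.preimage (by fun_prop)
  have h0S : (0 : ℂ) ∈ S := by simpa [S] using hr
  have h1S : (1 : ℂ) ∈ S := by simpa [S] using hvw.2
  have hanalytic : ∀ v' ∈ Metric.ball (0 : V) r, ∀ s ∈ S,
      AnalyticAt ℂ (fun p : V × ℂ => b (p.1, p.2 • w)) (v', s) := fun v' hv' s hs =>
    AnalyticAt.fun_comp (g := b) (hball (v', s • w) ⟨hv', hs⟩).1
      (analyticAt_fst.prod (analyticAt_snd.smul analyticAt_const))
  have hslice : ∀ v' ∈ Metric.ball (0 : V) r, AnalyticOnNhd ℂ (fun s : ℂ => b (v', s • w)) S :=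
    fun v' hv' s hs => (hanalytic v' hv' s hs).fun_comp (analyticAt_const.prod analyticAt_id)
  have hzero : ∀ᶠ s : ℂ in 𝓝 0, b (v, s • w) = 0 := by
    refine ((hslice v hvw.1) 0 h0S).eventually_eq_zero_or_eventually_ne_zero.resolve_right
      fun hisolated => ?_
    have hzeros := eventually_exists_mem_eq_zero (hS.mem_nhds h0S)
      (Filter.eventually_of_mem (Metric.isOpen_ball.mem_nhds hvw.1) fun v' hv' =>
        (hslice v' hv').differentiableOn)
      (fun s hs => (hanalytic v hvw.1 s hs).continuousAt) (by simpa using h0) hisolated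
    obtain ⟨v', hPv', ⟨s, hs, hs0⟩, hv'⟩ := (hPv.and_eventually
      (hzeros.and (Metric.isOpen_ball.mem_nhds hvw.1))).exists
    exact (hball (v', s • w) ⟨hv', hs⟩).2 hPv' hs0
  simpa using (hslice v hvw.1).eqOn_zero_of_preconnected_of_eventuallyEq_zero
    (isPreconnected_setOf_smul_mem_ball w r) h0S hzero h1S

end Hurwitz

/-! ### The Segre preserving equation at a point -/

section Segre

variable {E : Type*} [NormedAddCommGroup E] [NormedSpace ℂ E]

/-- The determinant of an endomorphism of `E × ℂ` whose second component is replaced by `ℓ`. When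
`T` is the differential of a map and `ℓ` a conormal of a Segre variety, it vanishes exactly where
the first component of the map fails to be immersive along that variety. -/
noncomputable def segreCofactor (T : E × ℂ →L[ℂ] E × ℂ) (ℓ : E × ℂ →L[ℂ] ℂ) : ℂ :=
  ((ContinuousLinearMap.fst ℂ E ℂ ∘L T).prod ℓ).det

theorem analyticAt_segreCofactor [FiniteDimensional ℂ E] {V : Type*} [NormedAddCommGroup V]
    [NormedSpace ℂ V] {T : V → E × ℂ →L[ℂ] E × ℂ} {ℓ : V → E × ℂ →L[ℂ] ℂ} {x : V}
    (hT : AnalyticAt ℂ T x) (hℓ : AnalyticAt ℂ ℓ x) :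
    AnalyticAt ℂ (fun y => segreCofactor (T y) (ℓ y)) x := by
  have hpair : AnalyticAt ℂ (fun y => (ContinuousLinearMap.fst ℂ E ℂ ∘L T y, ℓ y)) x :=
    (((ContinuousLinearMap.compL ℂ (E × ℂ) (E × ℂ) E
      (ContinuousLinearMap.fst ℂ E ℂ)).analyticAt _).fun_comp hT).prod hℓ
  exact analyticAt_det ((ContinuousLinearMap.analyticAt (ContinuousLinearMap.prodₗᵢ ℂ
    |>.toContinuousLinearEquiv.toContinuousLinearMap) _).fun_comp hpair)

theorem segreCofactor_snd [FiniteDimensional ℂ E] (T : E × ℂ →L[ℂ] E × ℂ) :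
    segreCofactor T (ContinuousLinearMap.snd ℂ E ℂ) =
      (ContinuousLinearMap.fst ℂ E ℂ ∘L T ∘L ContinuousLinearMap.inl ℂ E ℂ).det :=
  det_prod_snd (ContinuousLinearMap.fst ℂ E ℂ ∘L T : E × ℂ →ₗ[ℂ] E)

theorem mul_det_eq_mul_segreCofactor [FiniteDimensional ℂ E] {T : E × ℂ →L[ℂ] E × ℂ}
    {ℓ ℓ' : E × ℂ →L[ℂ] ℂ} {a : ℂ} (h : ℓ' ∘L T = a • ℓ) :
    ℓ' (0, 1) * T.det = a * segreCofactor T ℓ :=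
  mul_det_eq_mul_det_of_comp_eq_smul (T := (T : E × ℂ →ₗ[ℂ] E × ℂ)) (ℓ := (ℓ : E × ℂ →ₗ[ℂ] ℂ))
    (ℓ' := (ℓ' : E × ℂ →ₗ[ℂ] ℂ)) (congrArg ContinuousLinearMap.toLinearMap h)

/-- The differential at `(p.1, q p)` of `(z, w) ↦ w - q (z, χ, τ)`, where `(χ, τ) = p.2`; its kernel
is the tangent space of the Segre variety `{w = q (z, χ, τ)}`. -/
noncomputable def leftConormal (q : E × E × ℂ → ℂ) (p : E × E × ℂ) : E × ℂ →L[ℂ] ℂ :=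
  ContinuousLinearMap.snd ℂ E ℂ -
    fderiv ℂ q p ∘L ContinuousLinearMap.inl ℂ E (E × ℂ) ∘L ContinuousLinearMap.fst ℂ E ℂ

/-- The differential at `p.2` of `(χ, τ) ↦ q (z, χ, τ)`, where `z = p.1`; its kernel is the tangent
space of the conjugate Segre variety `{q (z, χ, τ) = q p}`. -/
noncomputable def rightConormal (q : E × E × ℂ → ℂ) (p : E × E × ℂ) : E × ℂ →L[ℂ] ℂ :=
  fderiv ℂ q p ∘L ContinuousLinearMap.inr ℂ E (E × ℂ)

theorem leftConormal_apply (q : E × E × ℂ → ℂ) (p : E × E × ℂ) (v : E × ℂ) :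
    leftConormal q p v = v.2 - fderiv ℂ q p (v.1, 0) := rfl

theorem rightConormal_apply (q : E × E × ℂ → ℂ) (p : E × E × ℂ) (v : E × ℂ) :
    rightConormal q p v = fderiv ℂ q p (0, v) := rfl

theorem leftConormal_zero_one (q : E × E × ℂ → ℂ) (p : E × E × ℂ) :
    leftConormal q p (0, 1) = 1 := by
  have hzero : ((0 : E), (0 : E × ℂ)) = 0 := rfl
  rw [leftConormal_apply, hzero, map_zero, sub_zero]

theorem analyticAt_leftConormal {q : E × E × ℂ → ℂ} {p : E × E × ℂ} (hq : AnalyticAt ℂ q p) :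
    AnalyticAt ℂ (leftConormal q) p :=
  analyticAt_const.sub ((((ContinuousLinearMap.compL ℂ (E × ℂ) (E × E × ℂ) ℂ).flip
    (ContinuousLinearMap.inl ℂ E (E × ℂ) ∘L ContinuousLinearMap.fst ℂ E ℂ)).analyticAt _).fun_comp
      hq.fderiv)

theorem analyticAt_rightConormal {q : E × E × ℂ → ℂ} {p : E × E × ℂ} (hq : AnalyticAt ℂ q p) :
    AnalyticAt ℂ (rightConormal q) p :=
  (((ContinuousLinearMap.compL ℂ (E × ℂ) (E × E × ℂ) ℂ).flip
    (ContinuousLinearMap.inr ℂ E (E × ℂ))).analyticAt _).fun_comp hq.fderiv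

/-- The function `g_w - q'_z f_w` along the source complexification, where `H = (f, g)`: it measures
how the differential of `H` acts on the conormals of Segre varieties. -/
noncomputable def transversality (q q' : E × E × ℂ → ℂ) (H Ht : E × ℂ → E × ℂ)
    (p : E × E × ℂ) : ℂ :=
  leftConormal q' ((H (p.1, q p)).1, Ht p.2) (fderiv ℂ H (p.1, q p) (0, 1))

/-- The maps `q, q', H, Ht` are holomorphic at the points determined by `p` and satisfy the Segre
preserving equation near `p`. -/
structure IsSegreAt (q q' : E × E × ℂ → ℂ) (H Ht : E × ℂ → E × ℂ) (p : E × E × ℂ) : Prop where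
  analyticAt_source : AnalyticAt ℂ q p
  analyticAt_left : AnalyticAt ℂ H (p.1, q p)
  analyticAt_right : AnalyticAt ℂ Ht p.2
  analyticAt_target : AnalyticAt ℂ q' ((H (p.1, q p)).1, Ht p.2)
  eventually_eq : ∀ᶠ x in 𝓝 p, (H (x.1, q x)).2 = q' ((H (x.1, q x)).1, Ht x.2)

namespace IsSegreAt

variable {q q' : E × E × ℂ → ℂ} {H Ht : E × ℂ → E × ℂ} {p : E × E × ℂ}

theorem analyticAt_graph (h : IsSegreAt q q' H Ht p) :
    AnalyticAt ℂ (fun x : E × E × ℂ => (x.1, q x)) p :=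
  analyticAt_fst.prod h.analyticAt_source

theorem analyticAt_image (h : IsSegreAt q q' H Ht p) :
    AnalyticAt ℂ (fun x : E × E × ℂ => ((H (x.1, q x)).1, Ht x.2)) p :=
  (analyticAt_fst.comp (h.analyticAt_left.fun_comp_of_eq h.analyticAt_graph rfl)).prod
    (h.analyticAt_right.fun_comp_of_eq analyticAt_snd rfl)

theorem analyticAt_transversality [CompleteSpace E] (h : IsSegreAt q q' H Ht p) :
    AnalyticAt ℂ (transversality q q' H Ht) p := by
  have hconormal : AnalyticAt ℂ
      (fun x : E × E × ℂ => leftConormal q' ((H (x.1, q x)).1, Ht x.2)) p :=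
    (analyticAt_leftConormal h.analyticAt_target).fun_comp_of_eq h.analyticAt_image rfl
  have hdirection : AnalyticAt ℂ (fun x : E × E × ℂ => fderiv ℂ H (x.1, q x) (0, 1)) p :=
    ((ContinuousLinearMap.apply ℂ (E × ℂ) ((0, 1) : E × ℂ)).analyticAt _).fun_comp
      (h.analyticAt_left.fderiv.fun_comp_of_eq h.analyticAt_graph rfl)
  exact ((ContinuousLinearMap.id ℂ (E × ℂ →L[ℂ] ℂ)).analyticAt_bilinear _).comp₂
    hconormal hdirection

theorem fderiv_eq (h : IsSegreAt q q' H Ht p) (x : E) (v : E × ℂ) :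
    (fderiv ℂ H (p.1, q p) (x, fderiv ℂ q p (x, v))).2 =
      fderiv ℂ q' ((H (p.1, q p)).1, Ht p.2)
        ((fderiv ℂ H (p.1, q p) (x, fderiv ℂ q p (x, v))).1, fderiv ℂ Ht p.2 v) := by
  have hgraph : HasFDerivAt (fun x : E × E × ℂ => (x.1, q x)) _ p :=
    hasFDerivAt_fst.prodMk h.analyticAt_source.differentiableAt.hasFDerivAt
  have hleft : HasFDerivAt (fun x : E × E × ℂ => H (x.1, q x)) _ p :=
    HasFDerivAt.comp (g := H) p h.analyticAt_left.differentiableAt.hasFDerivAt hgraph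
  have hright : HasFDerivAt (fun x : E × E × ℂ => Ht x.2) _ p :=
    HasFDerivAt.comp (g := Ht) p h.analyticAt_right.differentiableAt.hasFDerivAt hasFDerivAt_snd
  have htarget : HasFDerivAt (fun x : E × E × ℂ => q' ((H (x.1, q x)).1, Ht x.2)) _ p :=
    HasFDerivAt.comp (g := q') p h.analyticAt_target.differentiableAt.hasFDerivAt
      (hleft.fst.prodMk hright)
  have hunique := (hleft.snd.congr_of_eventuallyEq
    (h.eventually_eq.mono fun _ hx => hx.symm)).unique htarget
  simpa using DFunLike.congr_fun hunique (x, v)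

theorem rightConormal_comp (h : IsSegreAt q q' H Ht p) :
    rightConormal q' ((H (p.1, q p)).1, Ht p.2) ∘L fderiv ℂ Ht p.2 =
      transversality q q' H Ht p • rightConormal q p := by
  refine ContinuousLinearMap.ext fun v => ?_
  have hchain := h.fderiv_eq 0 v
  set c := fderiv ℂ q p (0, v) with hc
  set b := fderiv ℂ H (p.1, q p) (0, 1) with hb
  have hdH : fderiv ℂ H (p.1, q p) (0, c) = c • b := by
    rw [hb, ← map_smul]
    simp
  have hsplit : ((c • b).1, fderiv ℂ Ht p.2 v) =
      c • ((b.1, 0) : E × E × ℂ) + (0, fderiv ℂ Ht p.2 v) := by simp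
  rw [hdH, hsplit, map_add, map_smul, Prod.smul_snd, smul_eq_mul, smul_eq_mul] at hchain
  simp only [ContinuousLinearMap.comp_apply, smul_apply, rightConormal_apply,
    transversality, leftConormal_apply, ← hb, ← hc, smul_eq_mul]
  linear_combination -hchain

theorem leftConormal_comp (h : IsSegreAt q q' H Ht p) :
    leftConormal q' ((H (p.1, q p)).1, Ht p.2) ∘L fderiv ℂ H (p.1, q p) =
      transversality q q' H Ht p • leftConormal q p := by
  set ℓ := leftConormal q' ((H (p.1, q p)).1, Ht p.2)
  refine ContinuousLinearMap.ext fun v => ?_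
  set d := fderiv ℂ q p (v.1, 0)
  have htangent : ℓ (fderiv ℂ H (p.1, q p) (v.1, d)) = 0 := by
    have hchain := h.fderiv_eq v.1 0
    rw [map_zero] at hchain
    exact sub_eq_zero.2 hchain
  have hsplit : v = (v.1, d) + (v.2 - d) • ((0 : E), (1 : ℂ)) := by
    ext <;> simp
  calc ℓ (fderiv ℂ H (p.1, q p) v)
      = ℓ (fderiv ℂ H (p.1, q p) (v.1, d)) + (v.2 - d) * ℓ (fderiv ℂ H (p.1, q p) (0, 1)) := by
        conv_lhs => rw [hsplit]
        simp only [map_add, map_smul, smul_eq_mul]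
    _ = transversality q q' H Ht p * leftConormal q p v := by
        rw [htangent, zero_add, mul_comm]
        rfl

variable [FiniteDimensional ℂ E]

theorem det_left_eq (h : IsSegreAt q q' H Ht p) :
    (fderiv ℂ H (p.1, q p)).det = transversality q q' H Ht p *
      segreCofactor (fderiv ℂ H (p.1, q p)) (leftConormal q p) := by
  rw [← mul_det_eq_mul_segreCofactor h.leftConormal_comp, leftConormal_zero_one, one_mul]

theorem mul_det_right_eq (h : IsSegreAt q q' H Ht p) :
    rightConormal q' ((H (p.1, q p)).1, Ht p.2) (0, 1) * (fderiv ℂ Ht p.2).det =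
      transversality q q' H Ht p * segreCofactor (fderiv ℂ Ht p.2) (rightConormal q p) :=
  mul_det_eq_mul_segreCofactor h.rightConormal_comp

end IsSegreAt

end Segre

/-! ### Normal defining functions -/

section Normal

variable {E : Type*} [NormedAddCommGroup E] [NormedSpace ℂ E]

/-- The germ of `q` at the origin is a normal defining function, in the uncurried variables
`(z, χ, τ)`. -/
structure IsNormal (q : E × E × ℂ → ℂ) : Prop where
  analyticAt : AnalyticAt ℂ q 0
  eventually_left : ∀ᶠ p : E × E × ℂ in 𝓝 0, q (0, p.2) = p.2.2
  eventually_right : ∀ᶠ p : E × E × ℂ in 𝓝 0, q (p.1, 0, p.2.2) = p.2.2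

namespace IsNormal

variable {q : E × E × ℂ → ℂ}

theorem map_zero (hq : IsNormal q) : q 0 = 0 := hq.eventually_left.self_of_nhds

theorem eventually_right_zero (hq : IsNormal q) : ∀ᶠ z : E in 𝓝 0, q (z, 0) = 0 :=
  ((Continuous.prodMk_left (0 : E × ℂ)).tendsto' 0 0 rfl).eventually
    hq.eventually_right

theorem eventually_left_zero (hq : IsNormal q) : ∀ᶠ v : E × ℂ in 𝓝 0, q (0, v) = v.2 :=
  ((Continuous.prodMk_right (0 : E)).tendsto' 0 0 rfl).eventually
    hq.eventually_left

theorem eventually_leftConormal_eq (hq : IsNormal q) :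
    ∀ᶠ z : E in 𝓝 0, leftConormal q (z, 0) = ContinuousLinearMap.snd ℂ E ℂ := by
  filter_upwards [hq.eventually_right_zero.eventually_nhds,
    ((Continuous.prodMk_left (0 : E × ℂ)).tendsto' 0 0 rfl).eventually
      hq.analyticAt.eventually_analyticAt] with z hz hqz
  have hslice : HasFDerivAt (fun z => q (z, 0)) _ z := HasFDerivAt.comp (g := q) z
    hqz.differentiableAt.hasFDerivAt (hasFDerivAt_prodMk_left z (0 : E × ℂ))
  have hzero := hslice.unique ((hasFDerivAt_const (0 : ℂ) z).congr_of_eventuallyEq hz)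
  rw [leftConormal, ← ContinuousLinearMap.comp_assoc, hzero, ContinuousLinearMap.zero_comp,
    sub_zero]

theorem eventually_rightConormal_eq (hq : IsNormal q) :
    ∀ᶠ v : E × ℂ in 𝓝 0, rightConormal q (0, v) = ContinuousLinearMap.snd ℂ E ℂ := by
  filter_upwards [hq.eventually_left_zero.eventually_nhds,
    ((Continuous.prodMk_right (0 : E)).tendsto' 0 0 rfl).eventually
      hq.analyticAt.eventually_analyticAt] with v hv hqv
  have hslice : HasFDerivAt (fun v => q (0, v)) _ v := HasFDerivAt.comp (g := q) v
    hqv.differentiableAt.hasFDerivAt (hasFDerivAt_prodMk_right (0 : E) v)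
  exact hslice.unique (hasFDerivAt_snd.congr_of_eventuallyEq hv)

theorem eventually_rightConormal_ne_zero [CompleteSpace E] (hq : IsNormal q) :
    ∀ᶠ p in 𝓝 (0 : E × E × ℂ), rightConormal q p (0, 1) ≠ 0 := by
  have hcont : ContinuousAt (fun p => rightConormal q p (0, 1)) 0 :=
    (analyticAt_rightConormal hq.analyticAt).continuousAt.clm_apply continuousAt_const
  have hzero : rightConormal q 0 = ContinuousLinearMap.snd ℂ E ℂ :=
    hq.eventually_rightConormal_eq.self_of_nhds
  exact hcont.eventually_ne (by simp [hzero])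

theorem fderiv_zero (hq : IsNormal q) (v : E × E × ℂ) : fderiv ℂ q 0 v = v.2.2 := by
  have hleft : (0 : ℂ) - fderiv ℂ q 0 (v.1, 0) = 0 :=
    DFunLike.congr_fun hq.eventually_leftConormal_eq.self_of_nhds (v.1, 0)
  have hright : fderiv ℂ q 0 (0, v.2) = v.2.2 :=
    DFunLike.congr_fun hq.eventually_rightConormal_eq.self_of_nhds v.2
  have hsplit : v = (v.1, 0) + (0, v.2) := by simp
  rw [zero_sub, neg_eq_zero] at hleft
  rw [hsplit, map_add, hleft, hright]
  simp

theorem exists_inverse [CompleteSpace E] (hq : IsNormal q) :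
    ∃ σ : E × E × ℂ → ℂ, IsNormal σ ∧ ∀ᶠ p in 𝓝 0, q (p.1, p.2.1, σ p) = p.2.2 := by
  let Φ : E × E × ℂ → E × E × ℂ := fun p => (p.1, p.2.1, q p)
  have hΦ : AnalyticAt ℂ Φ 0 :=
    analyticAt_fst.prod ((analyticAt_fst.comp analyticAt_snd).prod hq.analyticAt)
  have hΦ0 : Φ 0 = 0 := Prod.ext rfl (Prod.ext rfl hq.map_zero)
  have hderiv : fderiv ℂ Φ 0 = ContinuousLinearEquiv.refl ℂ (E × E × ℂ) := by
    have hΦ' : HasFDerivAt Φ _ 0 := hasFDerivAt_fst.prodMk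
      (hasFDerivAt_snd.fst.prodMk hq.analyticAt.differentiableAt.hasFDerivAt)
    rw [hΦ'.fderiv]
    exact ContinuousLinearMap.ext fun v => Prod.ext rfl (Prod.ext rfl (hq.fderiv_zero v))
  have hstrict : HasStrictFDerivAt Φ
      (ContinuousLinearEquiv.refl ℂ (E × E × ℂ) : E × E × ℂ →L[ℂ] E × E × ℂ) 0 :=
    hderiv ▸ hΦ.hasStrictFDerivAt
  let Ψ := hstrict.localInverse
  have hΨ : AnalyticAt ℂ Ψ 0 := hΦ0 ▸ (hstrict.toOpenPartialHomeomorph Φ).analyticAt_symm'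
    hstrict.mem_toOpenPartialHomeomorph_source hΦ hderiv
  have hleft : ∀ᶠ p in 𝓝 0, q p = p.2.2 → (Ψ p).2.2 = p.2.2 := by
    filter_upwards [hstrict.eventually_left_inverse] with p hp hqp
    have hfix : Φ p = p := Prod.ext rfl (Prod.ext rfl hqp)
    rw [hfix] at hp
    exact congrArg (fun x => x.2.2) hp
  refine ⟨fun p => (Ψ p).2.2, ⟨analyticAt_snd.comp (analyticAt_snd.comp hΨ), ?_, ?_⟩, ?_⟩
  · filter_upwards [hq.eventually_left,
      ((by fun_prop : Continuous fun p : E × E × ℂ => ((0 : E), p.2)).tendsto' 0 0 rfl).eventually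
        hleft] with p hp hleftp using hleftp hp
  · filter_upwards [hq.eventually_right,
      ((by fun_prop : Continuous fun p : E × E × ℂ => (p.1, (0 : E), p.2.2)).tendsto' 0 0
        rfl).eventually hleft] with p hp hleftp using hleftp hp
  · have hright : ∀ᶠ p in 𝓝 0, Φ (Ψ p) = p := hΦ0 ▸ hstrict.eventually_right_inverse
    filter_upwards [hright] with p hp
    have hz : (Φ (Ψ p)).1 = p.1 := congrArg Prod.fst hp
    have hχ : (Φ (Ψ p)).2.1 = p.2.1 := congrArg (fun x => x.2.1) hp
    have hw : (Φ (Ψ p)).2.2 = p.2.2 := congrArg (fun x => x.2.2) hp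
    rw [← hz, ← hχ]
    exact hw

theorem analyticAt_slice (hq : IsNormal q) :
    AnalyticAt ℂ (fun p : E × E => q (p.1, p.2, 0)) 0 :=
  hq.analyticAt.fun_comp_of_eq (analyticAt_fst.prod (analyticAt_snd.prod analyticAt_const)) rfl

theorem frequently_nhds_le_map_slice [CompleteSpace E] (hq : IsNormal q)
    (hne : ∃ᶠ p : E × E in 𝓝 0, q (p.1, p.2, 0) ≠ 0) :
    ∃ᶠ p : E × E in 𝓝 0,
      𝓝 (p.2, q (p.1, p.2, 0)) ≤ map (fun p : E × E => (p.2, q (p.1, p.2, 0))) (𝓝 p) := by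
  have h0 : ∀ᶠ χ : E in 𝓝 0, q (0, χ, 0) = 0 :=
    ((Continuous.prodMk_left (0 : ℂ)).tendsto' 0 0 rfl).eventually hq.eventually_left_zero
  refine frequently_nhds_le_map_snd_prodMk hq.analyticAt_slice
    ((frequently_fderiv_comp_inl_ne_zero hq.analyticAt_slice h0 hne).mono fun p hp => ?_)
  exact LinearMap.range_eq_top.2 (LinearMap.surjective_of_ne_zero
    fun hzero => hp (ContinuousLinearMap.coe_injective hzero))

end IsNormal

end Normal

/-! ### Segre preserving maps -/

section SegreMap

variable {E : Type*} [NormedAddCommGroup E] [NormedSpace ℂ E]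

/-- The Jacobian determinant at `(z, 0)` of the first component of `H` restricted to the Segre
variety `{w = 0}`. -/
noncomputable def segreJacobian (H : E × ℂ → E × ℂ) (z : E) : ℂ :=
  (fderiv ℂ (fun z => (H (z, 0)).1) z).det

theorem segreCofactor_fderiv_snd [FiniteDimensional ℂ E] {H : E × ℂ → E × ℂ} {z : E}
    (hH : DifferentiableAt ℂ H (z, 0)) :
    segreCofactor (fderiv ℂ H (z, 0)) (ContinuousLinearMap.snd ℂ E ℂ) = segreJacobian H z := by
  have hslice : HasFDerivAt (fun z => (H (z, 0)).1)
      (ContinuousLinearMap.fst ℂ E ℂ ∘L fderiv ℂ H (z, 0) ∘L ContinuousLinearMap.inl ℂ E ℂ) z :=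
    (HasFDerivAt.comp (g := H) z hH.hasFDerivAt (hasFDerivAt_prodMk_left z (0 : ℂ))).fst
  rw [segreCofactor_snd, segreJacobian, hslice.fderiv]

theorem fderiv_conjugate_comp_inl {q' : E × E × ℂ → ℂ} {Ht : E × ℂ → E × ℂ} {x : (E × ℂ) × E}
    (hq' : DifferentiableAt ℂ q' (x.2, Ht x.1)) (hHt : DifferentiableAt ℂ Ht x.1) :
    fderiv ℂ (fun x : (E × ℂ) × E => q' (x.2, Ht x.1)) x ∘L
        ContinuousLinearMap.inl ℂ (E × ℂ) E =
      rightConormal q' (x.2, Ht x.1) ∘L fderiv ℂ Ht x.1 := by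
  have hright : HasFDerivAt (fun x : (E × ℂ) × E => Ht x.1) _ x :=
    HasFDerivAt.comp (g := Ht) x hHt.hasFDerivAt hasFDerivAt_fst
  have htotal : HasFDerivAt (fun x : (E × ℂ) × E => q' (x.2, Ht x.1)) _ x :=
    HasFDerivAt.comp (g := q') x hq'.hasFDerivAt (hasFDerivAt_snd.prodMk hright)
  rw [htotal.fderiv]
  exact ContinuousLinearMap.ext fun v => rfl

theorem IsSegreAt.eventually [CompleteSpace E] {q q' : E × E × ℂ → ℂ}
    {H Ht : E × ℂ → E × ℂ} {p : E × E × ℂ} (h : IsSegreAt q q' H Ht p) :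
    ∀ᶠ x in 𝓝 p, IsSegreAt q q' H Ht x := by
  filter_upwards [h.analyticAt_source.eventually_analyticAt,
    h.analyticAt_graph.continuousAt.eventually h.analyticAt_left.eventually_analyticAt,
    (continuousAt_snd (p := p)).eventually h.analyticAt_right.eventually_analyticAt,
    h.analyticAt_image.continuousAt.eventually h.analyticAt_target.eventually_analyticAt,
    h.eventually_eq.eventually_nhds] with x hsource hleft hright htarget heq
  exact ⟨hsource, hleft, hright, htarget, heq⟩

/-- A holomorphic Segre preserving map `(H, Ht)` between the complexifications with normal defining
functions `q` and `q'`, as a germ at the origin. -/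
structure IsSegreMap (q q' : E × E × ℂ → ℂ) (H Ht : E × ℂ → E × ℂ) : Prop where
  source : IsNormal q
  target : IsNormal q'
  analyticAt_left : AnalyticAt ℂ H 0
  analyticAt_right : AnalyticAt ℂ Ht 0
  map_zero_left : H 0 = 0
  map_zero_right : Ht 0 = 0
  eventually_eq : ∀ᶠ x in 𝓝 0, (H (x.1, q x)).2 = q' ((H (x.1, q x)).1, Ht x.2)

namespace IsSegreMap

variable {q q' : E × E × ℂ → ℂ} {H Ht : E × ℂ → E × ℂ}

theorem graph_zero (h : IsSegreMap q q' H Ht) : ((0 : E × E × ℂ).1, q 0) = 0 :=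
  Prod.ext rfl h.source.map_zero

theorem image_zero (h : IsSegreMap q q' H Ht) :
    ((H ((0 : E × E × ℂ).1, q 0)).1, Ht (0 : E × E × ℂ).2) = 0 := by
  rw [h.graph_zero, h.map_zero_left, Prod.snd_zero, h.map_zero_right]
  rfl

theorem isSegreAt_zero (h : IsSegreMap q q' H Ht) : IsSegreAt q q' H Ht 0 where
  analyticAt_source := h.source.analyticAt
  analyticAt_left := h.graph_zero ▸ h.analyticAt_left
  analyticAt_right := h.analyticAt_right
  analyticAt_target := by rw [h.image_zero]; exact h.target.analyticAt
  eventually_eq := h.eventually_eq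

theorem tendsto_left (h : IsSegreMap q q' H Ht) :
    Tendsto (fun z : E => H (z, 0)) (𝓝 0) (𝓝 0) := by
  have hH : Tendsto H (𝓝 0) (𝓝 0) :=
    h.analyticAt_left.continuousAt.tendsto.trans_eq (by rw [h.map_zero_left])
  exact hH.comp ((Continuous.prodMk_left (0 : ℂ)).tendsto' 0 0 rfl)

theorem tendsto_right (h : IsSegreMap q q' H Ht) :
    Tendsto (fun χ : E => Ht (χ, 0)) (𝓝 0) (𝓝 0) := by
  have hHt : Tendsto Ht (𝓝 0) (𝓝 0) :=
    h.analyticAt_right.continuousAt.tendsto.trans_eq (by rw [h.map_zero_right])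
  exact hHt.comp ((Continuous.prodMk_left (0 : ℂ)).tendsto' 0 0 rfl)

theorem eventually_left_snd_eq_zero (h : IsSegreMap q q' H Ht) :
    ∀ᶠ z in 𝓝 0, (H (z, 0)).2 = 0 := by
  filter_upwards [((Continuous.prodMk_left (0 : E × ℂ)).tendsto' 0 0 rfl).eventually
      h.eventually_eq, h.source.eventually_right_zero,
    (h.tendsto_left.fst_nhds).eventually h.target.eventually_right_zero] with z heq hq hq'
  rw [hq, h.map_zero_right] at heq
  exact heq.trans hq'

theorem eventually_right_snd_eq_zero (h : IsSegreMap q q' H Ht) :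
    ∀ᶠ χ in 𝓝 0, (Ht (χ, 0)).2 = 0 := by
  filter_upwards [((by fun_prop : Continuous fun χ : E => ((0 : E), χ, (0 : ℂ))).tendsto' 0 0
      rfl).eventually h.eventually_eq,
    ((Continuous.prodMk_left (0 : ℂ)).tendsto' 0 0 rfl).eventually h.source.eventually_left_zero,
    h.tendsto_right.eventually h.target.eventually_left_zero] with χ heq hq hq'
  have hH0 : H (0, 0) = 0 := h.map_zero_left
  rw [hq, hH0] at heq
  exact hq'.symm.trans heq.symm

theorem analyticAt_conjugate (h : IsSegreMap q q' H Ht) :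
    AnalyticAt ℂ (fun x : (E × ℂ) × E => q' (x.2, Ht x.1)) 0 :=
  h.target.analyticAt.fun_comp_of_eq
    (analyticAt_snd.prod (h.analyticAt_right.fun_comp_of_eq analyticAt_fst rfl))
    (Prod.ext rfl h.map_zero_right)

variable [FiniteDimensional ℂ E]

theorem frequently_target_image_ne_zero (h : IsSegreMap q q' H Ht)
    (hH : ∃ᶠ z in 𝓝 0, segreJacobian H z ≠ 0) (hHt : ∃ᶠ χ in 𝓝 0, segreJacobian Ht χ ≠ 0)
    (hq' : ∃ᶠ p : E × E in 𝓝 0, q' (p.1, p.2, 0) ≠ 0) :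
    ∃ᶠ p : E × E in 𝓝 0, q' ((H (p.1, 0)).1, (Ht (p.2, 0)).1, 0) ≠ 0 := by
  let φ : E → E := fun z => (H (z, 0)).1
  let ψ : E → E := fun χ => (Ht (χ, 0)).1
  have hφ : AnalyticAt ℂ φ 0 := analyticAt_fst.comp
    (h.analyticAt_left.fun_comp_of_eq (analyticAt_id.prod analyticAt_const) rfl)
  have hψ : AnalyticAt ℂ ψ 0 := analyticAt_fst.comp
    (h.analyticAt_right.fun_comp_of_eq (analyticAt_id.prod analyticAt_const) rfl)
  have hzero : Prod.map φ ψ 0 = 0 :=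
    Prod.ext (Prod.ext_iff.1 h.map_zero_left).1 (Prod.ext_iff.1 h.map_zero_right).1
  have hcont : ContinuousAt (Prod.map φ ψ) 0 := hφ.continuousAt.prodMap hψ.continuousAt
  have hk : AnalyticAt ℂ (fun p : E × E => q' (p.1, p.2, 0)) (Prod.map φ ψ 0) :=
    h.target.analyticAt.fun_comp_of_eq
      (analyticAt_fst.prod (analyticAt_snd.prod analyticAt_const)) (by rw [hzero]; rfl)
  exact frequently_comp_ne_zero (k := fun p : E × E => q' (p.1, p.2, 0)) hcont
    (frequently_nhds_le_map_prodMap (frequently_nhds_le_map_of_det_ne_zero hφ hH)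
      (frequently_nhds_le_map_of_det_ne_zero hψ hHt)) hk (by rwa [hzero])

theorem frequently_source_ne_zero (h : IsSegreMap q q' H Ht)
    (hH : ∃ᶠ z in 𝓝 0, segreJacobian H z ≠ 0) (hHt : ∃ᶠ χ in 𝓝 0, segreJacobian Ht χ ≠ 0)
    (hq' : ∃ᶠ p : E × E in 𝓝 0, q' (p.1, p.2, 0) ≠ 0) :
    ∃ᶠ p : E × E in 𝓝 0, q (p.1, p.2, 0) ≠ 0 := by
  refine ((h.frequently_target_image_ne_zero hH hHt hq').and_eventually
    ((((by fun_prop : Continuous fun p : E × E => (p.1, p.2, (0 : ℂ))).tendsto' 0 0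
      rfl).eventually h.eventually_eq).and
    (((continuous_fst.tendsto' (0 : E × E) 0 rfl).eventually h.eventually_left_snd_eq_zero).and
    ((continuous_snd.tendsto' (0 : E × E) 0 rfl).eventually
      h.eventually_right_snd_eq_zero)))).mono ?_
  rintro ⟨z, χ⟩ ⟨hne, heq, hleft, hright⟩ hq
  refine hne ?_
  have hpoint : Ht (χ, 0) = ((Ht (χ, 0)).1, 0) := Prod.ext rfl hright
  rw [hq, hleft] at heq
  rw [← hpoint]
  exact heq.symm

theorem frequently_fderiv_conjugate_ne_zero (h : IsSegreMap q q' H Ht)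
    (hH : ∃ᶠ z in 𝓝 0, segreJacobian H z ≠ 0) (hHt : ∃ᶠ χ in 𝓝 0, segreJacobian Ht χ ≠ 0)
    (hq' : ∃ᶠ p : E × E in 𝓝 0, q' (p.1, p.2, 0) ≠ 0) :
    ∃ᶠ x : (E × ℂ) × E in 𝓝 0, fderiv ℂ (fun x : (E × ℂ) × E => q' (x.2, Ht x.1)) x ∘L
      ContinuousLinearMap.inl ℂ (E × ℂ) E ≠ 0 := by
  refine frequently_fderiv_comp_inl_ne_zero h.analyticAt_conjugate ?_ ?_
  · filter_upwards [h.target.eventually_right_zero] with ζ hζ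
    rwa [h.map_zero_right]
  · have hslice : Tendsto (fun p : E × E => (((p.2, 0), (H (p.1, 0)).1) : (E × ℂ) × E))
        (𝓝 0) (𝓝 0) :=
      (((by fun_prop : Continuous fun p : E × E => (p.2, (0 : ℂ))).tendsto' 0 0 rfl).prodMk_nhds
        (h.tendsto_left.fst_nhds.comp (continuous_fst.tendsto' (0 : E × E) 0 rfl)))
    refine hslice.frequently (((h.frequently_target_image_ne_zero hH hHt hq').and_eventually
      ((continuous_snd.tendsto' (0 : E × E) 0 rfl).eventually
        h.eventually_right_snd_eq_zero)).mono ?_)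
    rintro ⟨z, χ⟩ ⟨hne, hright⟩
    have hpoint : Ht (χ, 0) = ((Ht (χ, 0)).1, 0) := Prod.ext rfl hright
    rwa [← hpoint] at hne

theorem frequently_nhds_le_map_left (h : IsSegreMap q q' H Ht)
    (hH : ∃ᶠ z in 𝓝 0, segreJacobian H z ≠ 0) :
    ∃ᶠ p in 𝓝 (0 : E × E × ℂ), 𝓝 (p.2, (H (p.1, q p)).1) ≤
      map (fun p => (p.2, (H (p.1, q p)).1)) (𝓝 p) := by
  have : CompleteSpace E := FiniteDimensional.complete ℂ E
  let γ : E × E × ℂ → E := fun p => (H (p.1, q p)).1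
  have hγ : AnalyticAt ℂ γ 0 := analyticAt_fst.comp
    (h.isSegreAt_zero.analyticAt_left.fun_comp_of_eq h.isSegreAt_zero.analyticAt_graph rfl)
  have htendsto : Tendsto (fun z : E => (z, (0 : E × ℂ))) (𝓝 0) (𝓝 0) :=
    (Continuous.prodMk_left (0 : E × ℂ)).tendsto' 0 0 rfl
  refine frequently_nhds_le_map_snd_prodMk hγ (htendsto.frequently ((hH.and_eventually
    (h.source.eventually_right_zero.eventually_nhds.and
      (htendsto.eventually hγ.eventually_analyticAt))).mono ?_))
  rintro z ⟨hz, hq, hγz⟩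
  have hslice : HasFDerivAt (fun z => γ (z, 0)) _ z := HasFDerivAt.comp (g := γ) z
    hγz.differentiableAt.hasFDerivAt (hasFDerivAt_prodMk_left z (0 : E × ℂ))
  have hrestrict : (fun z => γ (z, 0)) =ᶠ[𝓝 z] fun z => (H (z, 0)).1 :=
    hq.mono fun y hy => by simp only [γ, hy]
  rw [← hslice.fderiv, hrestrict.fderiv_eq]
  exact range_eq_top_of_det_ne_zero hz

theorem frequently_transversality_ne_zero (h : IsSegreMap q q' H Ht)
    (hH : ∃ᶠ z in 𝓝 0, segreJacobian H z ≠ 0) (hHt : ∃ᶠ χ in 𝓝 0, segreJacobian Ht χ ≠ 0)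
    (hq' : ∃ᶠ p : E × E in 𝓝 0, q' (p.1, p.2, 0) ≠ 0) :
    ∃ᶠ p in 𝓝 0, transversality q q' H Ht p ≠ 0 := by
  have : CompleteSpace E := FiniteDimensional.complete ℂ E
  have hG0 : ((0 : E × E × ℂ).2, (H ((0 : E × E × ℂ).1, q 0)).1) = 0 := by
    rw [h.graph_zero, h.map_zero_left]; rfl
  have hcont : ContinuousAt (fun p : E × E × ℂ => (p.2, (H (p.1, q p)).1)) 0 :=
    continuousAt_snd.prodMk h.isSegreAt_zero.analyticAt_image.continuousAt.fst
  have hcomp := frequently_comp_ne_zero (k := fun x : (E × ℂ) × E =>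
    fderiv ℂ (fun x : (E × ℂ) × E => q' (x.2, Ht x.1)) x ∘L ContinuousLinearMap.inl ℂ (E × ℂ) E)
    hcont (h.frequently_nhds_le_map_left hH)
    ((((ContinuousLinearMap.compL ℂ (E × ℂ) ((E × ℂ) × E) ℂ).flip
      (ContinuousLinearMap.inl ℂ (E × ℂ) E)).analyticAt _).fun_comp
      (hG0 ▸ h.analyticAt_conjugate.fderiv))
    (by rw [hG0]; exact h.frequently_fderiv_conjugate_ne_zero hH hHt hq')
  refine (hcomp.and_eventually h.isSegreAt_zero.eventually).mono ?_
  rintro p ⟨hne, hp⟩ ha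
  refine hne ?_
  rw [fderiv_conjugate_comp_inl hp.analyticAt_target.differentiableAt
    hp.analyticAt_right.differentiableAt, hp.rightConormal_comp, ha]
  exact zero_smul ℂ (rightConormal q p)

theorem frequently_det_fderiv_left_ne_zero (h : IsSegreMap q q' H Ht)
    (hH : ∃ᶠ z in 𝓝 0, segreJacobian H z ≠ 0)
    (ha : ∃ᶠ p in 𝓝 0, transversality q q' H Ht p ≠ 0) :
    ∃ᶠ v in 𝓝 0, (fderiv ℂ H v).det ≠ 0 := by
  have : CompleteSpace E := FiniteDimensional.complete ℂ E
  have hp := h.isSegreAt_zero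
  have hcofactor : ∃ᶠ p in 𝓝 0,
      segreCofactor (fderiv ℂ H (p.1, q p)) (leftConormal q p) ≠ 0 := by
    have htendsto : Tendsto (fun z : E => (z, (0 : E × ℂ))) (𝓝 0) (𝓝 0) :=
      (Continuous.prodMk_left (0 : E × ℂ)).tendsto' 0 0 rfl
    refine htendsto.frequently ((hH.and_eventually (h.source.eventually_right_zero.and
      (h.source.eventually_leftConormal_eq.and
        (htendsto.eventually hp.eventually)))).mono ?_)
    rintro z ⟨hz, hq, hconormal, hanalytic⟩
    have hHz : AnalyticAt ℂ H (z, q (z, 0)) := hanalytic.analyticAt_left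
    rw [hq] at hHz
    rwa [hconormal, hq, segreCofactor_fderiv_snd hHz.differentiableAt]
  have hgraph : Tendsto (fun p : E × E × ℂ => (p.1, q p)) (𝓝 0) (𝓝 0) :=
    hp.analyticAt_graph.continuousAt.tendsto.trans_eq (by rw [h.graph_zero])
  refine hgraph.frequently (((frequently_mul_ne_zero hp.analyticAt_transversality
    (analyticAt_segreCofactor (hp.analyticAt_left.fderiv.fun_comp_of_eq hp.analyticAt_graph rfl)
      (analyticAt_leftConormal hp.analyticAt_source)) ha hcofactor).and_eventually
    hp.eventually).mono ?_)
  rintro p ⟨hne, hpoint⟩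
  rwa [hpoint.det_left_eq]

theorem frequently_det_fderiv_right_ne_zero (h : IsSegreMap q q' H Ht)
    (hHt : ∃ᶠ χ in 𝓝 0, segreJacobian Ht χ ≠ 0)
    (ha : ∃ᶠ p in 𝓝 0, transversality q q' H Ht p ≠ 0) :
    ∃ᶠ v in 𝓝 0, (fderiv ℂ Ht v).det ≠ 0 := by
  have : CompleteSpace E := FiniteDimensional.complete ℂ E
  have hp := h.isSegreAt_zero
  have hcofactor : ∃ᶠ p : E × E × ℂ in 𝓝 0,
      segreCofactor (fderiv ℂ Ht p.2) (rightConormal q p) ≠ 0 := by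
    have htendsto : Tendsto (fun χ : E => (χ, (0 : ℂ))) (𝓝 0) (𝓝 0) :=
      (Continuous.prodMk_left (0 : ℂ)).tendsto' 0 0 rfl
    have hinclusion : Tendsto (fun χ : E => ((0 : E), χ, (0 : ℂ))) (𝓝 0) (𝓝 0) :=
      ((Continuous.prodMk_right (0 : E)).tendsto' 0 0 rfl).comp htendsto
    refine hinclusion.frequently ((hHt.and_eventually
      ((htendsto.eventually h.source.eventually_rightConormal_eq).and
        (htendsto.eventually h.analyticAt_right.eventually_analyticAt))).mono ?_)
    rintro χ ⟨hχ, hconormal, hanalytic⟩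
    rwa [hconormal, segreCofactor_fderiv_snd hanalytic.differentiableAt]
  refine (continuous_snd.tendsto' (0 : E × E × ℂ) 0 rfl).frequently
    (((frequently_mul_ne_zero hp.analyticAt_transversality
      (analyticAt_segreCofactor (hp.analyticAt_right.fderiv.fun_comp_of_eq analyticAt_snd rfl)
        (analyticAt_rightConormal hp.analyticAt_source)) ha hcofactor).and_eventually
      hp.eventually).mono ?_)
  rintro p ⟨hne, hpoint⟩
  rw [← hpoint.mul_det_right_eq] at hne
  exact right_ne_zero_of_mul hne

theorem eventually_det_right_eq_zero_of_transversality_eq_zero (h : IsSegreMap q q' H Ht) :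
    ∀ᶠ p in 𝓝 0, transversality q q' H Ht p = 0 → (fderiv ℂ Ht p.2).det = 0 := by
  have : CompleteSpace E := FiniteDimensional.complete ℂ E
  have himage : Tendsto (fun p : E × E × ℂ => ((H (p.1, q p)).1, Ht p.2)) (𝓝 0) (𝓝 0) :=
    h.isSegreAt_zero.analyticAt_image.continuousAt.tendsto.trans_eq (by rw [h.image_zero])
  filter_upwards [h.isSegreAt_zero.eventually,
    himage.eventually h.target.eventually_rightConormal_ne_zero] with p hp hne ha
  have hdet := hp.mul_det_right_eq
  rw [ha, zero_mul] at hdet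
  exact (mul_eq_zero.1 hdet).resolve_left hne

theorem eventually_transversality_left_eq_zero (h : IsSegreMap q q' H Ht)
    (hdet : ∃ᶠ v in 𝓝 0, (fderiv ℂ Ht v).det ≠ 0) (h0 : transversality q q' H Ht 0 = 0) :
    ∀ᶠ z in 𝓝 0, transversality q q' H Ht (z, 0) = 0 := by
  have : CompleteSpace E := FiniteDimensional.complete ℂ E
  have hswap : Tendsto (fun x : (E × ℂ) × E => (x.2, x.1)) (𝓝 0) (𝓝 0) :=
    continuous_swap.tendsto' 0 0 rfl
  have hanalytic : AnalyticAt ℂ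
      (fun x : (E × ℂ) × E => transversality q q' H Ht (x.2, x.1)) 0 :=
    h.isSegreAt_zero.analyticAt_transversality.fun_comp_of_eq
      (analyticAt_snd.prod analyticAt_fst) rfl
  have hpropagate := eventually_eq_zero_of_frequently_ne_zero hanalytic
    (eventually_frequently_ne_zero (analyticAt_det h.analyticAt_right.fderiv) hdet)
    ((hswap.eventually h.eventually_det_right_eq_zero_of_transversality_eq_zero).mono
      fun x hx => mt hx)
  exact (((Continuous.prodMk_right (0 : E × ℂ)).tendsto' 0 0 rfl).eventually hpropagate).mono
    fun z hz => hz h0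

theorem eventually_transversality_inverse_eq_zero (h : IsSegreMap q q' H Ht)
    (hdet : ∃ᶠ v in 𝓝 0, (fderiv ℂ H v).det ≠ 0) {σ : E × E × ℂ → ℂ} (hσ : IsNormal σ)
    (hinv : ∀ᶠ p in 𝓝 0, q (p.1, p.2.1, σ p) = p.2.2)
    (h0 : ∀ᶠ z in 𝓝 0, transversality q q' H Ht (z, 0) = 0) :
    ∀ᶠ p : E × E in 𝓝 0, transversality q q' H Ht (p.1, p.2, σ (p.1, p.2, 0)) = 0 := by
  have : CompleteSpace E := FiniteDimensional.complete ℂ E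
  let ρ : (E × ℂ) × E → E × E × ℂ := fun x => (x.1.1, x.2, x.1.2)
  let S : E × E × ℂ → E × E × ℂ := fun p => (p.1, p.2.1, σ p)
  have hρ : Tendsto ρ (𝓝 0) (𝓝 0) := (by fun_prop : Continuous ρ).tendsto' 0 0 rfl
  have hρ_analytic : AnalyticAt ℂ ρ 0 := (analyticAt_fst.comp analyticAt_fst).prod
    (analyticAt_snd.prod (analyticAt_snd.comp analyticAt_fst))
  have hS : AnalyticAt ℂ S 0 :=
    analyticAt_fst.prod ((analyticAt_fst.comp analyticAt_snd).prod hσ.analyticAt)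
  have hS0 : S 0 = 0 := Prod.ext rfl (Prod.ext rfl hσ.map_zero)
  have hStendsto : Tendsto S (𝓝 0) (𝓝 0) := hS.continuousAt.tendsto.trans_eq (by rw [hS0])
  have hanalytic : AnalyticAt ℂ (fun x => transversality q q' H Ht (S (ρ x))) 0 :=
    h.isSegreAt_zero.analyticAt_transversality.fun_comp_of_eq
      (hS.fun_comp_of_eq hρ_analytic rfl) hS0
  have hne : ∀ᶠ x in 𝓝 0, (fderiv ℂ H x.1).det ≠ 0 →
      transversality q q' H Ht (S (ρ x)) ≠ 0 := by
    filter_upwards [hρ.eventually hinv, (hStendsto.comp hρ).eventually h.isSegreAt_zero.eventually]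
      with x hx hpoint hdetx ha
    have hdet_eq := hpoint.det_left_eq
    have hgraph : ((S (ρ x)).1, q (S (ρ x))) = x.1 := Prod.ext rfl hx
    rw [Function.comp_apply, hgraph, ha, zero_mul] at hdet_eq
    exact hdetx hdet_eq
  have hpropagate := eventually_eq_zero_of_frequently_ne_zero hanalytic
    (eventually_frequently_ne_zero (analyticAt_det h.analyticAt_left.fderiv) hdet) hne
  filter_upwards [((by fun_prop : Continuous fun p : E × E => ((p.1, (0 : ℂ)), p.2)).tendsto' 0 0
      rfl).eventually hpropagate, (continuous_fst.tendsto' (0 : E × E) 0 rfl).eventually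
        (h0.and hσ.eventually_right_zero)] with p hp hz
  have hσz : σ (p.1, 0, 0) = 0 := hz.2
  have hbase : S (ρ ((p.1, 0), 0)) = (p.1, 0) := Prod.ext rfl (Prod.ext rfl hσz)
  exact hp (by rw [hbase, hz.1])

theorem transversality_zero_ne_zero (h : IsSegreMap q q' H Ht)
    (hH : ∃ᶠ z in 𝓝 0, segreJacobian H z ≠ 0) (hHt : ∃ᶠ χ in 𝓝 0, segreJacobian Ht χ ≠ 0)
    (hq' : ∃ᶠ p : E × E in 𝓝 0, q' (p.1, p.2, 0) ≠ 0) :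
    transversality q q' H Ht 0 ≠ 0 := by
  intro h0
  have : CompleteSpace E := FiniteDimensional.complete ℂ E
  have ha := h.frequently_transversality_ne_zero hH hHt hq'
  have hdetl := h.frequently_det_fderiv_left_ne_zero hH ha
  have hdetr := h.frequently_det_fderiv_right_ne_zero hHt ha
  obtain ⟨σ, hσ, hinv⟩ := h.source.exists_inverse
  have hinclusion : Tendsto (fun p : E × E => (p.1, p.2, (0 : ℂ))) (𝓝 0) (𝓝 0) :=
    (by fun_prop : Continuous fun p : E × E => (p.1, p.2, (0 : ℂ))).tendsto' 0 0 rfl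
  have hσ_ne : ∃ᶠ p : E × E in 𝓝 0, σ (p.1, p.2, 0) ≠ 0 := by
    refine ((h.frequently_source_ne_zero hH hHt hq').and_eventually
      (hinclusion.eventually hinv)).mono ?_
    rintro p ⟨hne, hp⟩ hσp
    rw [hσp] at hp
    exact hne hp
  have hγ : ContinuousAt (fun p : E × E => (p.2, σ (p.1, p.2, 0))) 0 :=
    continuousAt_snd.prodMk hσ.analyticAt_slice.continuousAt
  have hγ0 : ((0 : E × E).2, σ ((0 : E × E).1, (0 : E × E).2, 0)) = 0 :=
    Prod.ext rfl hσ.map_zero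
  have hdet_ne : ∃ᶠ p : E × E in 𝓝 0, (fderiv ℂ Ht (p.2, σ (p.1, p.2, 0))).det ≠ 0 :=
    frequently_comp_ne_zero (k := fun v => (fderiv ℂ Ht v).det) hγ
      (hσ.frequently_nhds_le_map_slice hσ_ne)
      (by rw [hγ0]; exact analyticAt_det h.analyticAt_right.fderiv) (by rwa [hγ0])
  have hsurface : Tendsto (fun p : E × E => (p.1, p.2, σ (p.1, p.2, 0))) (𝓝 0) (𝓝 0) :=
    (continuousAt_fst.prodMk hγ).tendsto.trans_eq (congrArg 𝓝 (Prod.ext rfl hγ0))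
  refine hdet_ne ?_
  filter_upwards [h.eventually_transversality_inverse_eq_zero hdetl hσ hinv
      (h.eventually_transversality_left_eq_zero hdetr h0),
    hsurface.eventually h.eventually_det_right_eq_zero_of_transversality_eq_zero]
    with p hp hdet
  exact not_not.2 (hdet hp)

theorem fderiv_snd_ne_zero (h : IsSegreMap q q' H Ht)
    (hH : ∃ᶠ z in 𝓝 0, segreJacobian H z ≠ 0) (hHt : ∃ᶠ χ in 𝓝 0, segreJacobian Ht χ ≠ 0)
    (hq' : ∃ᶠ p : E × E in 𝓝 0, q' (p.1, p.2, 0) ≠ 0) : (fderiv ℂ H 0 (0, 1)).2 ≠ 0 := by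
  have ha := h.transversality_zero_ne_zero hH hHt hq'
  rwa [transversality, h.image_zero, h.graph_zero, leftConormal_apply, h.target.fderiv_zero,
    Prod.snd_zero, sub_zero] at ha

end IsSegreMap

end SegreMap

/-! ### Holomorphic Segre preserving maps of `ℂⁿ × ℂ` -/

section Coordinates

theorem det_jacz {f : (Fin n → ℂ) → ℂ → Fin n → ℂ} {z : Fin n → ℂ}
    (hf : DifferentiableAt ℂ (fun z => f z 0) z) :
    (jacz f z).det = (fderiv ℂ (fun z => f z 0) z).det := by
  rw [ContinuousLinearMap.det, ← LinearMap.det_toMatrix']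
  congr 1
  ext i j
  rw [LinearMap.toMatrix'_apply]
  have hcoord : HasFDerivAt (fun z => f z 0 i) _ z := (hasFDerivAt_pi'.1 hf.hasFDerivAt) i
  simp [jacz, pd, hcoord.fderiv]

theorem frequently_segreJacobian_ne_zero {f : (Fin n → ℂ) → ℂ → Fin n → ℂ}
    {g : (Fin n → ℂ) → ℂ → ℂ}
    (hf : ∀ᶠ p in 𝓝 (0 : (Fin n → ℂ) × ℂ),
      AnalyticAt ℂ (fun q : (Fin n → ℂ) × ℂ => f q.1 q.2) p)
    (hne : ¬ ∀ᶠ z in 𝓝 (0 : Fin n → ℂ), (jacz f z).det = 0) :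
    ∃ᶠ z in 𝓝 0, segreJacobian (fun v : (Fin n → ℂ) × ℂ => (f v.1 v.2, g v.1 v.2)) z ≠ 0 := by
  have hanalytic : ∀ᶠ z in 𝓝 (0 : Fin n → ℂ),
      AnalyticAt ℂ (fun q : (Fin n → ℂ) × ℂ => f q.1 q.2) (z, 0) :=
    ((Continuous.prodMk_left (0 : ℂ)).tendsto' 0 0 rfl).eventually hf
  refine ((Filter.not_eventually.1 hne).and_eventually hanalytic).mono fun z hz => ?_
  have hslice : DifferentiableAt ℂ (fun z => f z 0) z := DifferentiableAt.comp
    (g := fun q : (Fin n → ℂ) × ℂ => f q.1 q.2) (f := fun z => (z, (0 : ℂ))) z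
    hz.2.differentiableAt (by fun_prop)
  rw [segreJacobian, ← det_jacz hslice]
  exact hz.1

theorem IsNormalDF.isNormal {Q : (Fin n → ℂ) → (Fin n → ℂ) → ℂ → ℂ} (hQ : IsNormalDF Q) :
    IsNormal (fun p : (Fin n → ℂ) × (Fin n → ℂ) × ℂ => Q p.1 p.2.1 p.2.2) where
  analyticAt := hQ.1.self_of_nhds
  eventually_left := hQ.2.mono fun _ hp => hp.1
  eventually_right := hQ.2.mono fun _ hp => hp.2

theorem IsHSPM.isSegreMap {Q Q' : (Fin n → ℂ) → (Fin n → ℂ) → ℂ → ℂ}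
    {f ft : (Fin n → ℂ) → ℂ → Fin n → ℂ} {g gt : (Fin n → ℂ) → ℂ → ℂ}
    (hH : IsHSPM Q Q' f g ft gt) (hQ : IsNormalDF Q) (hQ' : IsNormalDF Q') :
    IsSegreMap (fun p : (Fin n → ℂ) × (Fin n → ℂ) × ℂ => Q p.1 p.2.1 p.2.2)
      (fun p => Q' p.1 p.2.1 p.2.2) (fun v => (f v.1 v.2, g v.1 v.2))
      (fun v => (ft v.1 v.2, gt v.1 v.2)) := by
  obtain ⟨hf, hg, hft, hgt, hf0, hg0, hft0, hgt0, heq⟩ := hH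
  exact
    { source := hQ.isNormal
      target := hQ'.isNormal
      analyticAt_left := hf.self_of_nhds.prod hg.self_of_nhds
      analyticAt_right := hft.self_of_nhds.prod hgt.self_of_nhds
      map_zero_left := Prod.ext hf0 hg0
      map_zero_right := Prod.ext hft0 hgt0
      eventually_eq := heq }

end Coordinates

theorem statement0_general (n : ℕ) (Q Q' : (Fin n → ℂ) → (Fin n → ℂ) → ℂ → ℂ)
    (hQ : IsNormalDF Q) (hQ' : IsNormalDF Q') (hM' : FiniteType Q')
    (f ft : (Fin n → ℂ) → ℂ → Fin n → ℂ) (g gt : (Fin n → ℂ) → ℂ → ℂ)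
    (hH : IsHSPM Q Q' f g ft gt) (hnd : TotallySegreNondeg f ft) : SegreTransversal g := by
  have hmap := hH.isSegreMap hQ hQ'
  have hderiv := hmap.fderiv_snd_ne_zero (frequently_segreJacobian_ne_zero hH.1 hnd.1)
    (frequently_segreJacobian_ne_zero hH.2.2.1 hnd.2) (Filter.not_eventually.1 hM')
  have hslice : HasFDerivAt (fun w : ℂ => (f 0 w, g 0 w)) _ 0 :=
    HasFDerivAt.comp (g := fun v : (Fin n → ℂ) × ℂ => (f v.1 v.2, g v.1 v.2)) (0 : ℂ)
      hmap.analyticAt_left.differentiableAt.hasFDerivAt (hasFDerivAt_prodMk_right 0 0)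
  rw [SegreTransversal, hslice.snd.hasDerivAt.deriv]
  exact hderiv

/-- Theorem 1.1: if `M'` is of finite type at `0` and the HSPM `ℋ` is
totally Segre nondegenerate at `0`, then `ℋ` is Segre transversal to `ℳ'` at `0`. -/
theorem statement0 (n : ℕ) (hn : 1 ≤ n)
    (Q Q' : (Fin n → ℂ) → (Fin n → ℂ) → ℂ → ℂ)
    (hQ : IsRealNormalDF Q) (hQ' : IsRealNormalDF Q')
    (hM' : FiniteType Q')
    (f ft : (Fin n → ℂ) → ℂ → Fin n → ℂ) (g gt : (Fin n → ℂ) → ℂ → ℂ)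
    (hH : IsHSPM Q Q' f g ft gt)
    (hnd : TotallySegreNondeg f ft) :
    SegreTransversal g :=
  statement0_general n Q Q' hQ.1 hQ'.1 hM' f ft g gt hH hnd

end HSPMpaper
end

section
/- Let n ≥ 1 and let Q and Q′ be real normal defining functions of dimension n, defining hypersurfaces M and M′ with complexifications ℳ and ℳ′. Assume M is holomorphically nondegenerate at 0, and let ℋ = (f,g,f̃,g̃) be an HSPM sending (ℳ,0) into (ℳ′,0). Then at least one of the following holds: (i) ℋ is transversally null (g ≡ 0 and g̃ ≡ 0 near 0) and Q′(f(z,w), f̃(χ,τ), 0) = 0 for all (z,w) and (χ,τ) near 0 (i.e. ℋ maps a full neighborhood of 0 in ℂ^{2n+2} into ℳ′); or (ii) there exists a point (z₀,w₀,χ₀,τ₀) in the domain of definition with w₀ = Q(z₀,χ₀,τ₀) such that both the Jacobian matrix of (z,w) ↦ (f(z,w),g(z,w)) at (z₀,w₀) and the Jacobian matrix of (χ,τ) ↦ (f̃(χ,τ),g̃(χ,τ)) at (χ₀,τ₀) are invertible (so ℋ is a biholomorphism near a point of ℳ), and moreover M′ is holomorphically nondegenerate at 0. -/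
open Filter Topology Complex

namespace HSPMpaper

variable {n : ℕ}

/-!
Let `Δ(y, p) = w' - Q'(z', p')` be the defining function of `ℳ'` evaluated at the images
`(z', w') = (f, g)(y)` and `p' = (f̃, g̃)(p)`; it vanishes on `ℳ`, and if its germ at `0` is zero,
then normality of `Q'` gives (i). The point is that `Δ` cannot be killed by a vector field in `p`
alone without being zero: if `∂_{v(p)} Δ = 0` for a generically nonvanishing `v`, then
differentiating `Δ(z, Q(z,p), p) = 0` along `v` gives `∂_{v(p)} Q(z,p) · ∂_w Δ = 0` on `ℳ`.
Holomorphic nondegeneracy says that the first factor is not zero, so `∂_w Δ` vanishes on `ℳ` and is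
again killed by `v`; by induction all `∂_w^k Δ` vanish on `ℳ`, and `Δ` is zero near `0`.

Such a `v` exists whenever (ii) fails. If `det (f̃, g̃)'` is identically zero, take `v` in the
kernel of `(f̃, g̃)'`. If `det (f, g)'` is identically zero, do the same after exchanging the roles
of `(z, w)` and `(χ, τ)`, which replaces `Q` by `Q̄` because `Q` is real. If `det (f̃, g̃)'` is not
identically zero but `M'` is holomorphically degenerate, `Q'` is killed by a vector field in `p'`,
which lifts through `(f̃, g̃)` to a field `v`.
-/

section Germs

theorem eventually_nhds_prod_swap {X Y : Type*} [TopologicalSpace X] [TopologicalSpace Y]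
    {p : X × Y → Prop} {a : X} {b : Y} (h : ∀ᶠ x in 𝓝 (a, b), p x) :
    ∀ᶠ y in 𝓝 b, ∀ᶠ x in 𝓝 a, p (x, y) :=
  ((continuous_swap.tendsto (b, a)).eventually h).curry_nhds

variable {E F : Type*} [NormedAddCommGroup E] [NormedSpace ℂ E]

theorem eventually_eq_zero_or_of_mul {f g : E → ℂ} {x : E} (hf : AnalyticAt ℂ f x)
    (hg : AnalyticAt ℂ g x) (h : ∀ᶠ y in 𝓝 x, f y * g y = 0) :
    (∀ᶠ y in 𝓝 x, f y = 0) ∨ ∀ᶠ y in 𝓝 x, g y = 0 := by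
  refine or_iff_not_imp_left.2 fun hf0 => ?_
  obtain ⟨r, hr, hball⟩ := Metric.eventually_nhds_iff_ball.1
    (hf.eventually_analyticAt.and (hg.eventually_analyticAt.and h))
  obtain ⟨y, hy, hyr⟩ :=
    ((not_eventually.1 hf0).and_eventually (Metric.ball_mem_nhds x hr)).exists
  have hgy : ∀ᶠ y' in 𝓝 y, g y' = 0 := by
    filter_upwards [(hball y hyr).1.continuousAt.eventually_ne hy,
      Metric.isOpen_ball.mem_nhds hyr] with y' hfy' hy'
    exact (mul_eq_zero.1 (hball y' hy').2.2).resolve_left hfy'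
  have hg_ball : AnalyticOnNhd ℂ g (Metric.ball x r) := fun z hz => (hball z hz).2.1
  filter_upwards [Metric.ball_mem_nhds x hr] with z hz
  exact hg_ball.eqOn_zero_of_preconnected_of_eventuallyEq_zero
    (convex_ball x r).isPreconnected hyr hgy hz

theorem eventually_forall_eq_zero {ι : Type*} {f : ι → E → ℂ} {x : E}
    (hf : ∀ᶠ y in 𝓝 x, ∀ i, AnalyticAt ℂ (f i) y) (h : ∀ i, ∀ᶠ y in 𝓝 x, f i y = 0) :
    ∀ᶠ y in 𝓝 x, ∀ i, f i y = 0 := by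
  obtain ⟨r, hr, hball⟩ := Metric.eventually_nhds_iff_ball.1 hf
  filter_upwards [Metric.ball_mem_nhds x hr] with y hy i
  have hfi : AnalyticOnNhd ℂ (f i) (Metric.ball x r) := fun z hz => hball z hz i
  exact hfi.eqOn_zero_of_preconnected_of_eventuallyEq_zero (convex_ball x r).isPreconnected
    (Metric.mem_ball_self hr) (h i) hy

theorem eventually_eq_zero_of_slice [PseudoMetricSpace F] {h : E × F → ℂ} {a : E} {b : F}
    (hh : ∀ᶠ x in 𝓝 (a, b), AnalyticAt ℂ (fun z => h (z, x.2)) x.1) :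
    ∀ᶠ x in 𝓝 (a, b), (∀ᶠ z in 𝓝 a, h (z, x.2) = 0) → h x = 0 := by
  obtain ⟨r, hr, hball⟩ := Metric.eventually_nhds_iff_ball.1 hh
  filter_upwards [Metric.ball_mem_nhds _ hr] with x hx h0
  rw [← ball_prod_same] at hball hx
  have hslice : AnalyticOnNhd ℂ (fun z => h (z, x.2)) (Metric.ball a r) :=
    fun z hz => hball (z, x.2) ⟨hz, hx.2⟩
  exact hslice.eqOn_zero_of_preconnected_of_eventuallyEq_zero (convex_ball a r).isPreconnected
    (Metric.mem_ball_self hr) h0 hx.1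

/-- The filter of properties that hold generically near `x`, that is, wherever some holomorphic
function whose germ at `x` is not zero does not vanish. It is finer than `𝓝 x`. -/
def genericNhds (x : E) : Filter E where
  sets := {s | ∃ D : E → ℂ, AnalyticAt ℂ D x ∧ (∃ᶠ y in 𝓝 x, D y ≠ 0) ∧
    ∀ᶠ y in 𝓝 x, D y ≠ 0 → y ∈ s}
  univ_sets := ⟨1, analyticAt_const, by simp, by simp⟩
  sets_of_superset := fun ⟨D, hD, hD0, hs⟩ hst =>
    ⟨D, hD, hD0, hs.mono fun _ hy hDy => hst (hy hDy)⟩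
  inter_sets := fun ⟨D₁, hD₁, hne₁, hs₁⟩ ⟨D₂, hD₂, hne₂, hs₂⟩ => by
    refine ⟨D₁ * D₂, hD₁.mul hD₂, fun h => ?_, ?_⟩
    · simp only [not_not, Pi.mul_apply] at h
      rcases eventually_eq_zero_or_of_mul hD₁ hD₂ h with h | h
      · exact hne₁ (h.mono fun _ => not_not.2)
      · exact hne₂ (h.mono fun _ => not_not.2)
    · filter_upwards [hs₁, hs₂] with y h₁ h₂ hy
      exact ⟨h₁ (left_ne_zero_of_mul hy), h₂ (right_ne_zero_of_mul hy)⟩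

variable [NormedAddCommGroup F] [NormedSpace ℂ F] {x : E} {f : E → ℂ}

theorem genericNhds_le_nhds : genericNhds x ≤ 𝓝 x := fun _ hs =>
  ⟨1, analyticAt_const, Frequently.of_forall fun _ => one_ne_zero,
    mem_of_superset hs fun _ hy _ => hy⟩

instance : (genericNhds x).NeBot := neBot_iff.2 fun h => by
  obtain ⟨D, -, hD0, hD⟩ : ∅ ∈ genericNhds x := empty_mem_iff_bot.2 h
  obtain ⟨y, hy, hDy⟩ := (hD0.and_eventually hD).exists
  exact hDy hy

theorem eventually_eq_zero_of_generic (hf : AnalyticAt ℂ f x)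
    (h : ∀ᶠ y in genericNhds x, f y = 0) : ∀ᶠ y in 𝓝 x, f y = 0 := by
  obtain ⟨D, hD, hD0, hDf⟩ := h
  refine (eventually_eq_zero_or_of_mul hD hf ?_).resolve_left fun h =>
    hD0 (h.mono fun _ => not_not.2)
  filter_upwards [hDf] with y hy
  exact mul_eq_zero.2 (or_iff_not_imp_left.2 hy)

theorem eventually_generic_ne_zero (hf : AnalyticAt ℂ f x) (h : ∃ᶠ y in 𝓝 x, f y ≠ 0) :
    ∀ᶠ y in genericNhds x, f y ≠ 0 :=
  ⟨f, hf, h, .of_forall fun _ => id⟩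

theorem tendsto_genericNhds {φ : E → F} {σ : F → E} (hφ : AnalyticAt ℂ φ x)
    (hσ : Tendsto σ (𝓝 (φ x)) (𝓝 x)) (hφσ : ∀ᶠ y in 𝓝 (φ x), φ (σ y) = y) :
    Tendsto φ (genericNhds x) (genericNhds (φ x)) := fun s ⟨D, hD, hD0, hDs⟩ => by
  refine ⟨D ∘ φ, hD.comp hφ, hσ.frequently ?_, hφ.continuousAt.eventually hDs⟩
  exact (hD0.and_eventually hφσ).mono fun y hy => by
    simpa only [Function.comp_apply, hy.2] using hy.1

theorem tendsto_snd_genericNhds {a : E} {b : F} :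
    Tendsto Prod.snd (genericNhds (a, b)) (genericNhds b) :=
  tendsto_genericNhds (σ := (a, ·)) analyticAt_snd
    (Continuous.prodMk_right a).continuousAt (.of_forall fun _ => rfl)

theorem eventually_eq_zero_of_generic_slices {h : E × F → ℂ} {a : E} {b : F}
    (hh : AnalyticAt ℂ h (a, b)) (h0 : ∀ᶠ q in genericNhds b, ∀ᶠ z in 𝓝 a, h (z, q) = 0) :
    ∀ᶠ x in 𝓝 (a, b), h x = 0 := by
  refine eventually_eq_zero_of_generic hh ?_
  have hslice : ∀ᶠ x in 𝓝 (a, b), (∀ᶠ z in 𝓝 a, h (z, x.2) = 0) → h x = 0 :=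
    eventually_eq_zero_of_slice <| hh.eventually_analyticAt.mono fun _ hx => hx.along_fst
  filter_upwards [hslice.filter_mono genericNhds_le_nhds, tendsto_snd_genericNhds.eventually h0]
    with x hx h0x using hx h0x

end Germs

section DirectionalDerivatives

variable {E F : Type*} [NormedAddCommGroup E] [NormedSpace ℂ E]
  [NormedAddCommGroup F] [NormedSpace ℂ F]

/-- The derivative of `f` in the constant direction `u`, as a function of the base point. -/
noncomputable def dirDeriv (u : E) (f : E → ℂ) : E → ℂ := fun x => fderiv ℂ f x u

/-- The iterated derivative of `f` in the constant directions listed in `l`; the last direction of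
the list is applied first. -/
noncomputable def dirDerivs (l : List E) (f : E → ℂ) : E → ℂ := l.foldr dirDeriv f

theorem dirDerivs_cons (u : E) (l : List E) (f : E → ℂ) :
    dirDerivs (u :: l) f = dirDeriv u (dirDerivs l f) := rfl

theorem dirDerivs_append (l l' : List E) (f : E → ℂ) :
    dirDerivs (l ++ l') f = dirDerivs l (dirDerivs l' f) :=
  List.foldr_append

variable {f g : E → ℂ} {x : E}

theorem analyticAt_dirDeriv (hf : AnalyticAt ℂ f x) (u : E) : AnalyticAt ℂ (dirDeriv u f) x :=
  ((ContinuousLinearMap.apply ℂ ℂ u).analyticAt _).comp hf.fderiv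

theorem analyticAt_dirDerivs (hf : AnalyticAt ℂ f x) (l : List E) :
    AnalyticAt ℂ (dirDerivs l f) x := by
  induction l with
  | nil => exact hf
  | cons u l ih => exact analyticAt_dirDeriv ih u

theorem dirDeriv_eventuallyEq (h : f =ᶠ[𝓝 x] g) (u : E) : dirDeriv u f =ᶠ[𝓝 x] dirDeriv u g :=
  h.fderiv.fun_comp fun T => T u

theorem dirDerivs_eventually_eq_zero (h : ∀ᶠ y in 𝓝 x, f y = 0) (l : List E) :
    ∀ᶠ y in 𝓝 x, dirDerivs l f y = 0 := by
  induction l with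
  | nil => exact h
  | cons u l ih =>
    exact (dirDeriv_eventuallyEq (g := 0) ih u).mono fun y hy => hy.trans (by simp [dirDeriv])

theorem dirDeriv_dirDeriv (hf : AnalyticAt ℂ f x) (u v : E) :
    dirDeriv u (dirDeriv v f) x = fderiv ℂ (fderiv ℂ f) x u v := by
  have h := hf.fderiv.differentiableAt.hasFDerivAt.clm_apply (hasFDerivAt_const v x)
  simpa [dirDeriv] using!
    congrArg (fun T : E →L[ℂ] ℂ => T u) h.fderiv

theorem dirDeriv_comm (hf : AnalyticAt ℂ f x) (u v : E) :
    dirDeriv u (dirDeriv v f) x = dirDeriv v (dirDeriv u f) x := by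
  rw [dirDeriv_dirDeriv hf, dirDeriv_dirDeriv hf]
  exact (hf.contDiffAt (n := ⊤)).isSymmSndFDerivAt_of_omega u v

theorem dirDerivs_eventuallyEq_of_perm (hf : AnalyticAt ℂ f x) {l l' : List E} (h : l.Perm l') :
    dirDerivs l f =ᶠ[𝓝 x] dirDerivs l' f := by
  induction h with
  | nil => rfl
  | cons u _ ih => exact dirDeriv_eventuallyEq ih u
  | swap u v l =>
    exact hf.eventually_analyticAt.mono fun y hy => dirDeriv_comm (analyticAt_dirDerivs hy l) v u
  | trans _ _ ih₁ ih₂ => exact ih₁.trans ih₂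

theorem dirDeriv_sum {ι : Type*} (s : Finset ι) (c : ι → ℂ) (u : ι → E) (f : E → ℂ) (x : E) :
    dirDeriv (∑ i ∈ s, c i • u i) f x = ∑ i ∈ s, c i * dirDeriv (u i) f x := by
  simp only [dirDeriv, map_sum, map_smul, smul_eq_mul]

variable {S : E × F → ℂ} {z : E} {q : F}

theorem fderiv_slice_left (hS : DifferentiableAt ℂ S (z, q)) (u : E) :
    fderiv ℂ (fun z => S (z, q)) z u = fderiv ℂ S (z, q) (u, 0) :=
  congrArg (fun T : E →L[ℂ] ℂ => T u)
    (hS.hasFDerivAt.comp (f := (·, q)) z (hasFDerivAt_prodMk_left z q)).fderiv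

theorem fderiv_slice_right (hS : DifferentiableAt ℂ S (z, q)) (v : F) :
    fderiv ℂ (fun q => S (z, q)) q v = fderiv ℂ S (z, q) (0, v) :=
  congrArg (fun T : F →L[ℂ] ℂ => T v)
    (hS.hasFDerivAt.comp (f := (z, ·)) q (hasFDerivAt_prodMk_right z q)).fderiv

theorem dirDerivs_slice_left (hS : AnalyticAt ℂ S (z, q)) (l : List E) :
    dirDerivs l (fun z => S (z, q)) z = dirDerivs (l.map (·, 0)) S (z, q) := by
  induction l generalizing z with
  | nil => rfl
  | cons u l ih =>
    have hslice : dirDerivs l (fun z => S (z, q)) =ᶠ[𝓝 z]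
        fun z => dirDerivs (l.map (·, 0)) S (z, q) :=
      ((Continuous.prodMk_left q).continuousAt.eventually hS.eventually_analyticAt).mono
        fun z' hz' => ih hz'
    rw [dirDerivs_cons, dirDeriv, hslice.fderiv_eq,
      fderiv_slice_left (analyticAt_dirDerivs hS _).differentiableAt]
    rfl

theorem fderiv_dirDerivs_slice_left (hS : AnalyticAt ℂ S (z, q)) (l : List E) (v : F) :
    fderiv ℂ (fun q => dirDerivs l (fun z => S (z, q)) z) q v =
      dirDerivs l (fun z => fderiv ℂ S (z, q) (0, v)) z := by
  have hslice : (fun q => dirDerivs l (fun z => S (z, q)) z) =ᶠ[𝓝 q]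
      fun q => dirDerivs (l.map (·, 0)) S (z, q) :=
    ((Continuous.prodMk_right z).continuousAt.eventually hS.eventually_analyticAt).mono
      fun q' hq' => dirDerivs_slice_left hq' l
  have hperm : ((0, v) :: l.map (·, (0 : F))).Perm (l.map (·, 0) ++ [(0, v)]) :=
    (List.perm_append_singleton _ _).symm
  calc fderiv ℂ (fun q => dirDerivs l (fun z => S (z, q)) z) q v
      = dirDerivs ((0, v) :: l.map (·, 0)) S (z, q) := by
        rw [hslice.fderiv_eq, fderiv_slice_right (analyticAt_dirDerivs hS _).differentiableAt]
        rfl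
    _ = dirDerivs (l.map (·, 0)) (dirDeriv (0, v) S) (z, q) := by
        rw [(dirDerivs_eventuallyEq_of_perm hS hperm).self_of_nhds, dirDerivs_append]
        rfl
    _ = dirDerivs l (fun z => fderiv ℂ S (z, q) (0, v)) z :=
        (dirDerivs_slice_left (analyticAt_dirDeriv hS _) l).symm

theorem analyticAt_dirDerivs_slice_left (hS : AnalyticAt ℂ S (z, q)) (l : List E) :
    AnalyticAt ℂ (fun q => dirDerivs l (fun z => S (z, q)) z) q := by
  have hslice : (fun q => dirDerivs (l.map (·, 0)) S (z, q)) =ᶠ[𝓝 q]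
      fun q => dirDerivs l (fun z => S (z, q)) z :=
    ((Continuous.prodMk_right z).continuousAt.eventually hS.eventually_analyticAt).mono
      fun q' hq' => (dirDerivs_slice_left hq' l).symm
  exact (analyticAt_dirDerivs hS _).along_snd.congr hslice

theorem iteratedDeriv_line {U : Set E} (hU : IsOpen U) (hf : AnalyticOnNhd ℂ f U) (a y : E)
    (k : ℕ) : ∀ t : ℂ, a + t • y ∈ U →
      iteratedDeriv k (fun t : ℂ => f (a + t • y)) t =
        dirDerivs (List.replicate k y) f (a + t • y) := by
  induction k with
  | zero => exact fun t _ => by simp [dirDerivs]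
  | succ k ih =>
    intro t ht
    have hline : HasDerivAt (fun t : ℂ => a + t • y) y t := by
      simpa using ((hasDerivAt_id t).smul_const y).const_add a
    have hk : iteratedDeriv k (fun t : ℂ => f (a + t • y)) =ᶠ[𝓝 t]
        fun t => dirDerivs (List.replicate k y) f (a + t • y) :=
      (hline.continuousAt.eventually (hU.mem_nhds ht)).mono ih
    rw [iteratedDeriv_succ, hk.deriv_eq]
    exact ((analyticAt_dirDerivs (hf _ ht) _).differentiableAt.hasFDerivAt.comp_hasDerivAt t
      hline).deriv

theorem eq_zero_on_line {U : Set E} (hU : IsOpen U) (hc : Convex ℝ U)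
    (hf : AnalyticOnNhd ℂ f U) {a y : E} (ha : a ∈ U)
    (h0 : ∀ k, dirDerivs (List.replicate k y) f a = 0) {s : ℂ} (hs : a + s • y ∈ U) :
    f (a + s • y) = 0 := by
  let T : Set ℂ := {t | a + t • y ∈ U}
  have hT : Convex ℝ T := (hc.translate_preimage_right a).linear_preimage
    ((LinearMap.toSpanSingleton ℂ E y).restrictScalars ℝ)
  have hφ : AnalyticOnNhd ℂ (fun t : ℂ => f (a + t • y)) T := fun t ht =>
    AnalyticAt.comp (g := f) (hf _ ht)
      (analyticAt_const.add (analyticAt_id.smul analyticAt_const))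
  have h0T : (0 : ℂ) ∈ T := by simpa [T] using ha
  have horder : analyticOrderAt (fun t : ℂ => f (a + t • y)) 0 = ⊤ := by
    refine ENat.eq_top_iff_forall_ge.2 fun m =>
      (natCast_le_analyticOrderAt_iff_iteratedDeriv_eq_zero (hφ 0 h0T)).2 fun i _ => ?_
    rw [iteratedDeriv_line hU hf a y i 0 h0T, zero_smul, add_zero, h0]
  exact hφ.eqOn_zero_of_preconnected_of_eventuallyEq_zero hT.isPreconnected h0T
    (analyticOrderAt_eq_top.1 horder) hs

end DirectionalDerivatives

section SegreFamilies

variable {E F P : Type*} [NormedAddCommGroup E] [NormedSpace ℂ E]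
  [NormedAddCommGroup F] [NormedSpace ℂ F] [NormedAddCommGroup P] [NormedSpace ℂ P]

/-- The family of Segre varieties `w = R (z, p)` is nondegenerate at `0`: for generic parameters
`p`, every nonzero direction in the parameter space moves the germ of the variety at `z = 0` to
first order. -/
def SegreNondeg (R : E × P → ℂ) : Prop :=
  ∀ᶠ p in genericNhds 0, ∀ v ≠ 0, ∃ᶠ z in 𝓝 0, fderiv ℂ R (z, p) (0, v) ≠ 0

theorem eventually_fderiv_dirDeriv_eq_zero {K : F × P → ℂ} {x : F × P} (hK : AnalyticAt ℂ K x)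
    {v : P → P} (hv : ∀ᶠ y in 𝓝 x, fderiv ℂ K y (0, v y.2) = 0) (e : F) :
    ∀ᶠ y in 𝓝 x, fderiv ℂ (dirDeriv (e, 0) K) y (0, v y.2) = 0 := by
  filter_upwards [hK.eventually_analyticAt, hv.eventually_nhds] with y hKy hvy
  have hslice : (fun z => dirDeriv (0, v y.2) K (z, y.2)) =ᶠ[𝓝 y.1] 0 :=
    (Continuous.prodMk_left y.2).continuousAt.eventually hvy
  calc fderiv ℂ (dirDeriv (e, 0) K) y (0, v y.2)
      = fderiv ℂ (dirDeriv (0, v y.2) K) y (e, 0) := dirDeriv_comm hKy _ _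
    _ = fderiv ℂ (fun z => dirDeriv (0, v y.2) K (z, y.2)) y.1 e :=
        (fderiv_slice_left (analyticAt_dirDeriv hKy _).differentiableAt e).symm
    _ = 0 := by simp [hslice.fderiv_eq]

variable {R : E × P → ℂ} {G : (E × ℂ) × P → ℂ} {v : P → P}

theorem analyticAt_graph {x : E × P} (hR : AnalyticAt ℂ R x) :
    AnalyticAt ℂ (fun x : E × P => ((x.1, R x), x.2)) x :=
  (analyticAt_fst.prod hR).prod analyticAt_snd

theorem fderiv_comp_graph {x : E × P} (hR : AnalyticAt ℂ R x)
    (hG : AnalyticAt ℂ G ((x.1, R x), x.2)) (u : P) :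
    fderiv ℂ (fun x : E × P => G ((x.1, R x), x.2)) x (0, u) =
      fderiv ℂ R x (0, u) * fderiv ℂ G ((x.1, R x), x.2) ((0, 1), 0) +
        fderiv ℂ G ((x.1, R x), x.2) (0, u) := by
  have hgraph := (hasFDerivAt_fst.prodMk hR.differentiableAt.hasFDerivAt).prodMk
    (hasFDerivAt_snd (𝕜 := ℂ) (p := x))
  have hcomp := hG.differentiableAt.hasFDerivAt.comp (f := fun x : E × P => ((x.1, R x), x.2))
    x hgraph
  rw [← smul_eq_mul, ← map_smul, ← map_add]
  simpa using! congrArg (fun T : E × P →L[ℂ] ℂ => T (0, u)) hcomp.fderiv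

theorem tendsto_graph (hR : AnalyticAt ℂ R 0) (hR0 : R 0 = 0) :
    Tendsto (fun x : E × P => ((x.1, R x), x.2)) (𝓝 0) (𝓝 0) := by
  simpa [ContinuousAt, hR0] using! (analyticAt_graph hR).continuousAt

theorem eventually_fderiv_mul_dirDeriv_eq_zero (hR : AnalyticAt ℂ R 0) (hR0 : R 0 = 0)
    (hG : AnalyticAt ℂ G 0) (hGR : ∀ᶠ x : E × P in 𝓝 0, G ((x.1, R x), x.2) = 0)
    (hGv : ∀ᶠ y in 𝓝 0, fderiv ℂ G y (0, v y.2) = 0) :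
    ∀ᶠ x : E × P in 𝓝 0,
      fderiv ℂ R x (0, v x.2) * dirDeriv ((0, 1), 0) G ((x.1, R x), x.2) = 0 := by
  filter_upwards [hR.eventually_analyticAt,
    (tendsto_graph hR hR0).eventually (hG.eventually_analyticAt.and hGv), hGR.eventually_nhds]
    with x hRx ⟨hGx, hGvx⟩ hGRx
  have hderiv := fderiv_comp_graph hRx hGx (v x.2)
  rw [hGvx, add_zero, (show _ =ᶠ[𝓝 x] fun _ => (0 : ℂ) from hGRx).fderiv_eq] at hderiv
  exact hderiv.symm.trans (by simp)

theorem eventually_dirDeriv_eq_zero_on_graph (hR : AnalyticAt ℂ R 0) (hR0 : R 0 = 0)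
    (hRnd : SegreNondeg R) (hG : AnalyticAt ℂ G 0)
    (hGR : ∀ᶠ x : E × P in 𝓝 0, G ((x.1, R x), x.2) = 0)
    (hv : ∀ᶠ p in genericNhds 0, v p ≠ 0) (hGv : ∀ᶠ y in 𝓝 0, fderiv ℂ G y (0, v y.2) = 0) :
    ∀ᶠ x : E × P in 𝓝 0, dirDeriv ((0, 1), 0) G ((x.1, R x), x.2) = 0 := by
  have hGw : AnalyticAt ℂ (fun x : E × P => dirDeriv ((0, 1), 0) G ((x.1, R x), x.2)) 0 :=
    (analyticAt_dirDeriv hG _).comp_of_eq (analyticAt_graph hR) (by simp [hR0])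
  refine eventually_eq_zero_of_generic_slices (a := (0 : E)) (b := (0 : P)) hGw ?_
  have hslice : ∀ᶠ p in 𝓝 (0 : P), AnalyticAt ℂ R (0, p) ∧
      AnalyticAt ℂ (fun x : E × P => dirDeriv ((0, 1), 0) G ((x.1, R x), x.2)) (0, p) :=
    (Continuous.prodMk_right (0 : E)).continuousAt.eventually
      (hR.eventually_analyticAt.and hGw.eventually_analyticAt)
  have hprod := eventually_nhds_prod_swap (a := (0 : E)) (b := (0 : P))
    (eventually_fderiv_mul_dirDeriv_eq_zero hR hR0 hG hGR hGv)
  filter_upwards [hv, hRnd, (hslice.and hprod).filter_mono genericNhds_le_nhds]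
    with p hvp hRp ⟨⟨hRan, hGan⟩, hprodp⟩
  have hRv : AnalyticAt ℂ (fun z => dirDeriv (0, v p) R (z, p)) 0 :=
    (analyticAt_dirDeriv hRan _).along_fst
  exact (eventually_eq_zero_or_of_mul hRv hGan.along_fst hprodp).resolve_left fun h =>
    hRp (v p) hvp (h.mono fun _ => not_not.2)

theorem eventually_forall_dirDerivs_eq_zero_on_graph (hR : AnalyticAt ℂ R 0) (hR0 : R 0 = 0)
    (hRnd : SegreNondeg R) (hG : AnalyticAt ℂ G 0)
    (hGR : ∀ᶠ x : E × P in 𝓝 0, G ((x.1, R x), x.2) = 0)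
    (hv : ∀ᶠ p in genericNhds 0, v p ≠ 0) (hGv : ∀ᶠ y in 𝓝 0, fderiv ℂ G y (0, v y.2) = 0) :
    ∀ᶠ x : E × P in 𝓝 0, ∀ k,
      dirDerivs (List.replicate k ((0, 1), 0)) G ((x.1, R x), x.2) = 0 := by
  have hstationary (k : ℕ) : ∀ᶠ y in 𝓝 0,
      fderiv ℂ (dirDerivs (List.replicate k ((0, 1), 0)) G) y (0, v y.2) = 0 := by
    induction k with
    | zero => exact hGv
    | succ k ih => exact eventually_fderiv_dirDeriv_eq_zero (analyticAt_dirDerivs hG _) ih _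
  refine eventually_forall_eq_zero ?_ fun k => ?_
  · filter_upwards [hR.eventually_analyticAt,
      (tendsto_graph hR hR0).eventually hG.eventually_analyticAt] with x hRx hGx k
    exact AnalyticAt.comp (analyticAt_dirDerivs hGx _) (analyticAt_graph hRx)
  · induction k with
    | zero => exact hGR
    | succ k ih =>
      exact eventually_dirDeriv_eq_zero_on_graph hR hR0 hRnd (analyticAt_dirDerivs hG _) ih hv
        (hstationary k)

theorem eventually_eq_zero_of_stationary (hR : AnalyticAt ℂ R 0) (hR0 : R 0 = 0)
    (hRnd : SegreNondeg R) (hG : AnalyticAt ℂ G 0)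
    (hGR : ∀ᶠ x : E × P in 𝓝 0, G ((x.1, R x), x.2) = 0)
    (hv : ∀ᶠ p in genericNhds 0, v p ≠ 0) (hGv : ∀ᶠ y in 𝓝 0, fderiv ℂ G y (0, v y.2) = 0) :
    ∀ᶠ y in 𝓝 0, G y = 0 := by
  obtain ⟨r, hr, hball⟩ := Metric.eventually_nhds_iff_ball.1 hG.eventually_analyticAt
  have hproj : Tendsto (fun y : (E × ℂ) × P => (y.1.1, y.2)) (𝓝 0) (𝓝 0) :=
    Continuous.tendsto' (by fun_prop) _ _ rfl
  have hjet := eventually_forall_dirDerivs_eq_zero_on_graph hR hR0 hRnd hG hGR hv hGv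
  filter_upwards [Metric.ball_mem_nhds 0 hr, hproj.eventually hjet,
    hproj.eventually ((tendsto_graph hR hR0).eventually (Metric.ball_mem_nhds 0 hr))]
    with y hy hjety hgraphy
  have hline : y = ((y.1.1, R (y.1.1, y.2)), y.2) +
      (y.1.2 - R (y.1.1, y.2)) • (((0, 1), 0) : (E × ℂ) × P) := by
    ext <;> simp
  rw [hline] at hy ⊢
  exact eq_zero_on_line Metric.isOpen_ball (convex_ball 0 r) hball hgraphy hjety hy

end SegreFamilies

section Conjugation

instance {ι : Type*} [Fintype ι] {E : ι → Type*} [∀ i, SeminormedAddCommGroup (E i)]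
    [∀ i, StarAddMonoid (E i)] [∀ i, NormedStarGroup (E i)] : NormedStarGroup (∀ i, E i) where
  norm_star_le x := by simp [pi_norm_le_iff_of_nonneg, norm_le_pi_norm]

instance {E F : Type*} [SeminormedAddCommGroup E] [StarAddMonoid E] [NormedStarGroup E]
    [SeminormedAddCommGroup F] [StarAddMonoid F] [NormedStarGroup F] :
    NormedStarGroup (E × F) where
  norm_star_le x := by simp [Prod.norm_def]

variable {E F P : Type*}
  [NormedAddCommGroup E] [NormedSpace ℂ E] [StarAddMonoid E] [StarModule ℂ E] [NormedStarGroup E]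
  [NormedAddCommGroup F] [NormedSpace ℂ F] [StarAddMonoid F] [StarModule ℂ F] [NormedStarGroup F]
  [NormedAddCommGroup P] [NormedSpace ℂ P] [StarAddMonoid P] [StarModule ℂ P] [NormedStarGroup P]

/-- The conjugate `v ↦ star (p (star v))` of a multilinear map: the Taylor coefficients of
`y ↦ star (f (star y))` are the conjugates of those of `f`. -/
noncomputable def conjMultilinear {m : ℕ} (p : E [×m]→L[ℂ] F) : E [×m]→L[ℂ] F where
  toFun v := star (p (star v))
  map_update_add' v i x y := by simp only [← Function.update_star, star_add, p.map_update_add]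
  map_update_smul' v i c x := by
    simp only [← Function.update_star, star_smul, p.map_update_smul, star_star]
  cont := by fun_prop

theorem norm_conjMultilinear_le {m : ℕ} (p : E [×m]→L[ℂ] F) : ‖conjMultilinear p‖ ≤ ‖p‖ :=
  ContinuousMultilinearMap.opNorm_le_bound (norm_nonneg _) fun v =>
    (norm_star _).le.trans <| (p.le_opNorm _).trans_eq <| by simp only [Pi.star_apply, norm_star]

theorem analyticAt_star_star {f : E → F} {x : E} (hf : AnalyticAt ℂ f (star x)) :
    AnalyticAt ℂ (fun y => star (f (star y))) x := by
  obtain ⟨p, r, hp⟩ := hf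
  refine ⟨fun m => conjMultilinear (p m), r, ⟨hp.r_le.trans
    (FormalMultilinearSeries.radius_le_of_le fun m => norm_conjMultilinear_le (p m)),
    hp.r_pos, fun {y} hy => ?_⟩⟩
  have hy' : star y ∈ Metric.eball (0 : E) r := by
    simpa [Metric.mem_eball, edist_zero_right, enorm_eq_nnnorm] using hy
  simpa only [star_add] using! (hp.hasSum hy').star

theorem fderiv_star_star {f : E → F} {x : E} (hf : DifferentiableAt ℂ f (star x)) (u : E) :
    fderiv ℂ (fun y => star (f (star y))) x u = star (fderiv ℂ f (star x) (star u)) := by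
  have h := hf.hasFDerivAt.star_star
  rw [star_star] at h
  exact congrArg (fun T : E →L[ℂ] F => T u) h.fderiv

theorem tendsto_star_genericNhds {x : E} :
    Tendsto star (genericNhds x) (genericNhds (star x)) := by
  rintro s ⟨D, hD, hD0, hDs⟩
  refine ⟨fun y => star (D (star y)), analyticAt_star_star hD, ?_, ?_⟩
  · have hstar : Tendsto star (𝓝 (star x)) (𝓝 x) := by
      simpa using (continuous_star (R := E)).tendsto (star x)
    exact hstar.frequently (hD0.mono fun y hy => by simpa using hy)
  · filter_upwards [continuous_star.continuousAt.eventually hDs] with y hy hDy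
    exact hy (by simpa using hDy)

theorem SegreNondeg.star_star {R : E × P → ℂ} (hR : AnalyticAt ℂ R 0) (hRnd : SegreNondeg R) :
    SegreNondeg fun x : E × P => star (R (star x)) := by
  have hstar : Tendsto (star : E → E) (𝓝 0) (𝓝 0) := by
    simpa using (continuous_star (R := E)).tendsto 0
  have hgen : Tendsto (star : P → P) (genericNhds 0) (genericNhds 0) := by
    simpa using tendsto_star_genericNhds (x := (0 : P))
  have hRan : ∀ᶠ p in 𝓝 (0 : P), ∀ᶠ z in 𝓝 (0 : E), AnalyticAt ℂ R (z, p) :=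
    eventually_nhds_prod_swap hR.eventually_analyticAt
  filter_upwards [hgen.eventually (hRnd.and (hRan.filter_mono genericNhds_le_nhds))]
    with p ⟨hRp, hRanp⟩ v hv
  refine hstar.frequently (((hRp (star v) (star_ne_zero.2 hv)).and_eventually hRanp).mono ?_)
  rintro z ⟨hz, hRz⟩
  rw [fderiv_star_star (x := (star z, p)) (by simpa [Prod.star_def] using hRz.differentiableAt)]
  simpa [Prod.star_def] using hz

end Conjugation

section MultiIndices

/-- The list of coordinate directions in which `i` occurs `α i` times, with `i` increasing. -/
def dirList (α : Fin n → ℕ) : List (Fin n) := (List.ofFn fun i => List.replicate (α i) i).flatten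

theorem iterate_pd (i : Fin n) (k : ℕ) (F : (Fin n → ℂ) → ℂ) :
    (pd i)^[k] F = dirDerivs (List.replicate k (Pi.single i 1)) F := by
  induction k with
  | zero => rfl
  | succ k ih => rw [Function.iterate_succ_apply', ih]; rfl

theorem mpd_eq_dirDerivs (α : Fin n → ℕ) (F : (Fin n → ℂ) → ℂ) :
    mpd α F = dirDerivs ((dirList α).map (Pi.single · 1)) F := by
  have hlist (L : List (Fin n)) : (L.map fun i => (pd i)^[α i]).foldr (· ∘ ·) id F =
      dirDerivs ((L.map fun i => List.replicate (α i) i).flatten.map (Pi.single · 1)) F := by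
    induction L with
    | nil => rfl
    | cons i L ih =>
      simp only [List.map_cons, List.foldr_cons, Function.comp_apply, List.flatten_cons,
        List.map_append, List.map_replicate, dirDerivs_append, iterate_pd, ih]
  simpa only [mpd, dirList, List.ofFn_eq_map] using hlist (List.finRange n)

theorem perm_dirList_count (l : List (Fin n)) : l.Perm (dirList fun i => l.count i) :=
  List.perm_iff_count.2 fun j => by
    rw [dirList, List.count_flatten, List.map_ofFn, List.sum_ofFn]
    simp [List.count_replicate]

variable {F : (Fin n → ℂ) → ℂ} {a : Fin n → ℂ}

theorem dirDerivs_single_eq_zero_of_mpd (hF : AnalyticAt ℂ F a) (h : ∀ α, mpd α F a = 0)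
    (l : List (Fin n)) : dirDerivs (l.map (Pi.single · 1)) F a = 0 := by
  rw [← h fun i => l.count i, mpd_eq_dirDerivs]
  exact (dirDerivs_eventuallyEq_of_perm hF ((perm_dirList_count l).map _)).self_of_nhds

theorem dirDerivs_eq_zero_of_mpd (hF : AnalyticAt ℂ F a) (h : ∀ α, mpd α F a = 0)
    (L : List (Fin n → ℂ)) : dirDerivs L F a = 0 := by
  suffices ∀ l : List (Fin n), dirDerivs (L ++ l.map (Pi.single · 1)) F a = 0 by
    simpa using this []
  induction L with
  | nil => exact dirDerivs_single_eq_zero_of_mpd hF h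
  | cons w L ih =>
    intro l
    rw [List.cons_append, dirDerivs_cons, pi_eq_sum_univ' w, dirDeriv_sum]
    refine Finset.sum_eq_zero fun i _ => mul_eq_zero_of_right _ ?_
    have hmove := dirDerivs_eventuallyEq_of_perm hF
      (List.perm_middle (a := Pi.single i 1) (l₁ := L) (l₂ := l.map (Pi.single · (1 : ℂ)))).symm
    exact hmove.self_of_nhds.trans (ih (i :: l))

theorem eventually_eq_zero_iff_mpd (hF : AnalyticAt ℂ F a) :
    (∀ᶠ y in 𝓝 a, F y = 0) ↔ ∀ α, mpd α F a = 0 := by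
  refine ⟨fun h α => ?_, fun h => ?_⟩
  · rw [mpd_eq_dirDerivs]
    exact (dirDerivs_eventually_eq_zero h _).self_of_nhds
  · obtain ⟨r, hr, hball⟩ := Metric.eventually_nhds_iff_ball.1 hF.eventually_analyticAt
    filter_upwards [Metric.ball_mem_nhds a hr] with y hy
    have hline : y = a + (1 : ℂ) • (y - a) := by simp
    rw [hline] at hy ⊢
    exact eq_zero_on_line Metric.isOpen_ball (convex_ball a r) hball (Metric.mem_ball_self hr)
      (fun _ => dirDerivs_eq_zero_of_mpd hF h _) hy

end MultiIndices

section LinearAlgebra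

variable {K V ι κ : Type*} [Field K] [AddCommGroup V] [Module K V] [Fintype ι] [DecidableEq ι]

theorem det_dual_apply_basis_eq_zero_iff (b : Module.Basis ι K V) (c : ι → Module.Dual K V) :
    (Matrix.of fun j k => c j (b k)).det = 0 ↔ ∃ v ≠ 0, ∀ j, c j v = 0 := by
  have hmul (x : ι → K) :
      (Matrix.of fun j k => c j (b k)).mulVec x = fun j => c j (b.equivFun.symm x) := by
    ext j
    simp [Matrix.mulVec, dotProduct, b.equivFun_symm_apply, mul_comm]
  rw [← Matrix.exists_mulVec_eq_zero_iff]
  refine ⟨fun ⟨x, hx, h⟩ =>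
      ⟨b.equivFun.symm x, b.equivFun.symm.map_ne_zero_iff.2 hx, congrFun (hmul x ▸ h)⟩,
    fun ⟨v, hv, h⟩ => ⟨b.equivFun v, b.equivFun.map_ne_zero_iff.2 hv, ?_⟩⟩
  rw [hmul, b.equivFun.symm_apply_apply]
  exact funext h

theorem exists_common_kernel_of_det_eq_zero (b : Module.Basis ι K V) (c : κ → Module.Dual K V)
    (h : ∀ A : ι → κ, (Matrix.of fun j k => c (A j) (b k)).det = 0) :
    ∃ v ≠ 0, ∀ i, c i v = 0 := by
  by_contra! hker
  have : FiniteDimensional K V := b.finiteDimensional_of_finite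
  have hcoann : (Submodule.span K (Set.range c)).dualCoannihilator = ⊥ := by
    refine (Submodule.eq_bot_iff _).2 fun v hv => by_contra fun hv0 => ?_
    obtain ⟨i, hi⟩ := hker v hv0
    exact hi ((Submodule.mem_dualCoannihilator v).1 hv _ (Submodule.subset_span ⟨i, rfl⟩))
  have hspan : Submodule.span K (Set.range c) = ⊤ := by
    rw [← Subspace.dualCoannihilator_dualAnnihilator_eq (W := Submodule.span K (Set.range c)),
      hcoann, Submodule.dualAnnihilator_bot]
  let B := Module.Basis.ofSpan hspan.ge
  let e := b.dualBasis.indexEquiv B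
  have hB (k : ι) : ∃ i, c i = B (e k) :=
    Module.Basis.ofSpan_subset hspan.ge (Set.mem_range_self (e k))
  choose A hA using hB
  obtain ⟨v, hv, hvA⟩ := (det_dual_apply_basis_eq_zero_iff b _).1 (h A)
  have heval : Module.Dual.eval K V v = 0 := B.ext fun i => by
    simpa [hA] using hvA (e.symm i)
  exact hv ((Module.eval_apply_eq_zero_iff K v).1 heval)

end LinearAlgebra

section Nondegeneracy

variable {E P ι : Type*} [NormedAddCommGroup E] [NormedSpace ℂ E]
  [NormedAddCommGroup P] [NormedSpace ℂ P] [Fintype ι] [DecidableEq ι]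

theorem analyticAt_det_s1 {M : E → Matrix ι ι ℂ} {x : E}
    (h : ∀ i j, AnalyticAt ℂ (fun y => M y i j) x) : AnalyticAt ℂ (fun y => (M y).det) x := by
  simp only [Matrix.det_apply']
  exact Finset.univ.analyticAt_fun_sum fun σ _ =>
    analyticAt_const.mul (Finset.univ.analyticAt_fun_prod fun i _ => h (σ i) i)

variable {S : (Fin n → ℂ) × P → ℂ} {z : Fin n → ℂ} {p : P}

theorem analyticAt_mpd_slice_left (hS : AnalyticAt ℂ S (z, p)) (α : Fin n → ℕ) :
    AnalyticAt ℂ (fun q => mpd α (fun z => S (z, q)) z) p := by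
  simp only [mpd_eq_dirDerivs]
  exact analyticAt_dirDerivs_slice_left hS _

theorem fderiv_mpd_slice_left (hS : AnalyticAt ℂ S (z, p)) (α : Fin n → ℕ) (v : P) :
    fderiv ℂ (fun q => mpd α (fun z => S (z, q)) z) p v =
      mpd α (fun z => fderiv ℂ S (z, p) (0, v)) z := by
  simp only [mpd_eq_dirDerivs]
  exact fderiv_dirDerivs_slice_left hS _ v

theorem eventually_fderiv_eq_zero_iff (hS : AnalyticAt ℂ S (z, p)) (v : P) :
    (∀ᶠ z' in 𝓝 z, fderiv ℂ S (z', p) (0, v) = 0) ↔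
      ∀ α, fderiv ℂ (fun q => mpd α (fun z => S (z, q)) z) p v = 0 := by
  have hSv : AnalyticAt ℂ (fun z' => dirDeriv (0, v) S (z', p)) z :=
    (analyticAt_dirDeriv hS _).along_fst
  simp only [fderiv_mpd_slice_left hS]
  exact eventually_eq_zero_iff_mpd hSv

/-- The determinant in `HolNondeg`, for the rows given by the multi-indices `A` and the columns
given by the basis `b` of the parameter space. -/
noncomputable def nondegDet (S : (Fin n → ℂ) × P → ℂ) (A : ι → Fin n → ℕ)
    (b : Module.Basis ι ℂ P) (p : P) : ℂ :=
  (Matrix.of fun j k => fderiv ℂ (fun q => mpd (A j) (fun z => S (z, q)) 0) p (b k)).det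

theorem analyticAt_nondegDet (hS : AnalyticAt ℂ S (0, p)) (A : ι → Fin n → ℕ)
    (b : Module.Basis ι ℂ P) : AnalyticAt ℂ (nondegDet S A b) p :=
  analyticAt_det_s1 fun j k => analyticAt_dirDeriv (analyticAt_mpd_slice_left hS (A j)) (b k)

theorem segreNondeg_of_nondegDet_ne_zero (hS : AnalyticAt ℂ S 0) (A : ι → Fin n → ℕ)
    (b : Module.Basis ι ℂ P) (h : ∃ᶠ p in 𝓝 0, nondegDet S A b p ≠ 0) : SegreNondeg S := by
  have hSan : ∀ᶠ p in 𝓝 (0 : P), AnalyticAt ℂ S (0, p) :=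
    (Continuous.prodMk_right (0 : Fin n → ℂ)).continuousAt.eventually hS.eventually_analyticAt
  filter_upwards [eventually_generic_ne_zero (analyticAt_nondegDet hS A b) h,
    hSan.filter_mono genericNhds_le_nhds] with p hp hSp v hv hfreq
  simp only [not_not] at hfreq
  exact hp <| (det_dual_apply_basis_eq_zero_iff b fun j =>
    (fderiv ℂ (fun q => mpd (A j) (fun z => S (z, q)) 0) p : P →ₗ[ℂ] ℂ)).2
      ⟨v, hv, fun j => (eventually_fderiv_eq_zero_iff hSp v).1 hfreq (A j)⟩

theorem exists_tangent_field_of_nondegDet_eq_zero (hS : AnalyticAt ℂ S 0)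
    (b : Module.Basis ι ℂ P)
    (h : ∀ A : ι → Fin n → ℕ, ∀ᶠ p in 𝓝 0, nondegDet S A b p = 0) :
    ∃ v : P → P, (∀ᶠ p in 𝓝 0, v p ≠ 0) ∧ ∀ᶠ x in 𝓝 0, fderiv ℂ S x (0, v x.2) = 0 := by
  have hSan : ∀ᶠ p in 𝓝 (0 : P), AnalyticAt ℂ S (0, p) :=
    (Continuous.prodMk_right (0 : Fin n → ℂ)).continuousAt.eventually hS.eventually_analyticAt
  have hdet : ∀ᶠ p in 𝓝 (0 : P), ∀ A : ι → Fin n → ℕ, nondegDet S A b p = 0 :=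
    eventually_forall_eq_zero (hSan.mono fun p hp A => analyticAt_nondegDet hp A b) h
  have hker : ∀ᶠ p in 𝓝 (0 : P), ∃ v ≠ 0, ∀ᶠ z in 𝓝 0, fderiv ℂ S (z, p) (0, v) = 0 := by
    filter_upwards [hSan, hdet] with p hSp hp
    obtain ⟨v, hv, hvp⟩ := exists_common_kernel_of_det_eq_zero b (fun α =>
      (fderiv ℂ (fun q => mpd α (fun z => S (z, q)) 0) p : P →ₗ[ℂ] ℂ)) hp
    exact ⟨v, hv, (eventually_fderiv_eq_zero_iff hSp v).2 hvp⟩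
  obtain ⟨v, hv⟩ := hker.choice
  refine ⟨v, hv.mono fun _ hp => hp.1, ?_⟩
  have hslice : ∀ᶠ x in 𝓝 ((0 : Fin n → ℂ), (0 : P)),
      (∀ᶠ z in 𝓝 0, fderiv ℂ S (z, x.2) (0, v x.2) = 0) → fderiv ℂ S x (0, v x.2) = 0 :=
    eventually_eq_zero_of_slice (h := fun x => fderiv ℂ S x (0, v x.2)) <|
      hS.eventually_analyticAt.mono fun x hx => (analyticAt_dirDeriv hx (0, v x.2)).along_fst
  filter_upwards [hslice, continuous_snd.continuousAt.eventually hv] with x hx hvx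
  exact hx hvx.2

end Nondegeneracy

section Coordinates

/-- The coordinate basis of `ℂⁿ × ℂ`, formed by the directions `dirCT`. -/
noncomputable def coordBasis (n : ℕ) : Module.Basis (Fin (n + 1)) ℂ ((Fin n → ℂ) × ℂ) :=
  ((Pi.basisFun ℂ (Fin n)).prod (Module.Basis.singleton (Fin 1) ℂ)).reindex finSumFinEquiv

theorem coordBasis_apply (k : Fin (n + 1)) : coordBasis n k = dirCT n k := by
  refine Fin.lastCases ?_ (fun i => ?_) k <;>
    simp [coordBasis, dirCT, Module.Basis.prod_apply]

/-- The map `(z, w) ↦ (f (z, w), g (z, w))` of `ℂⁿ × ℂ`. -/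
def pairMap (f : (Fin n → ℂ) → ℂ → Fin n → ℂ) (g : (Fin n → ℂ) → ℂ → ℂ) (q : (Fin n → ℂ) × ℂ) :
    (Fin n → ℂ) × ℂ :=
  (f q.1 q.2, g q.1 q.2)

variable {f : (Fin n → ℂ) → ℂ → Fin n → ℂ} {g : (Fin n → ℂ) → ℂ → ℂ} {p : (Fin n → ℂ) × ℂ}

theorem analyticAt_det_jacFull (h : AnalyticAt ℂ (pairMap f g) p) :
    AnalyticAt ℂ (fun p => (jacFull f g p).det) p := by
  refine analyticAt_det_s1 fun j k => analyticAt_dirDeriv ?_ (dirCT n k)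
  refine Fin.lastCases ?_ (fun i => ?_) j
  · simpa only [Fin.snoc_last] using! analyticAt_snd.comp h
  · simpa only [Fin.snoc_castSucc] using!
      ((ContinuousLinearMap.proj i).analyticAt _).comp (analyticAt_fst.comp h)

theorem det_jacFull_eq_zero_iff (h : DifferentiableAt ℂ (pairMap f g) p) :
    (jacFull f g p).det = 0 ↔ ∃ v ≠ 0, fderiv ℂ (pairMap f g) p v = 0 := by
  have hfst (i : Fin n) (v) : fderiv ℂ (fun q : (Fin n → ℂ) × ℂ => f q.1 q.2 i) p v =
      (fderiv ℂ (pairMap f g) p v).1 i :=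
    congrArg (fun T : (Fin n → ℂ) × ℂ →L[ℂ] ℂ => T v)
      (((ContinuousLinearMap.proj (R := ℂ) (φ := fun _ : Fin n => ℂ) i).comp
        (ContinuousLinearMap.fst ℂ (Fin n → ℂ) ℂ)).hasFDerivAt.comp p h.hasFDerivAt).fderiv
  have hsnd (v) : fderiv ℂ (fun q : (Fin n → ℂ) × ℂ => g q.1 q.2) p v =
      (fderiv ℂ (pairMap f g) p v).2 :=
    congrArg (fun T : (Fin n → ℂ) × ℂ →L[ℂ] ℂ => T v)
      ((ContinuousLinearMap.snd ℂ (Fin n → ℂ) ℂ).hasFDerivAt.comp p h.hasFDerivAt).fderiv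
  have hdet := det_dual_apply_basis_eq_zero_iff (coordBasis n) fun i =>
    (fderiv ℂ (fun q : (Fin n → ℂ) × ℂ =>
      (Fin.snoc (f q.1 q.2) (g q.1 q.2) : Fin (n + 1) → ℂ) i) p).toLinearMap
  simpa [coordBasis_apply, jacFull, Fin.forall_fin_succ', hfst, hsnd, Prod.ext_iff, funext_iff]
    using hdet

theorem fderiv_pairMap_surjective (h : DifferentiableAt ℂ (pairMap f g) p)
    (hdet : (jacFull f g p).det ≠ 0) : Function.Surjective (fderiv ℂ (pairMap f g) p) := by
  refine (LinearMap.injective_iff_surjective (f := (fderiv ℂ (pairMap f g) p).toLinearMap)).1 ?_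
  refine (injective_iff_map_eq_zero _).2 fun v hv => by_contra fun hv0 => ?_
  exact hdet ((det_jacFull_eq_zero_iff h).2 ⟨v, hv0, hv⟩)

theorem exists_kernel_field (h : AnalyticAt ℂ (pairMap f g) p)
    (hdet : ∀ᶠ q in 𝓝 p, (jacFull f g q).det = 0) :
    ∃ v : (Fin n → ℂ) × ℂ → (Fin n → ℂ) × ℂ,
      ∀ᶠ q in 𝓝 p, v q ≠ 0 ∧ fderiv ℂ (pairMap f g) q (v q) = 0 :=
  Eventually.choice <| (h.eventually_analyticAt.and hdet).mono fun _ hq =>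
    (det_jacFull_eq_zero_iff hq.1.differentiableAt).1 hq.2

theorem exists_lifted_field (h : AnalyticAt ℂ (pairMap f g) p)
    (hdet : ∃ᶠ q in 𝓝 p, (jacFull f g q).det ≠ 0) (w : (Fin n → ℂ) × ℂ → (Fin n → ℂ) × ℂ) :
    ∃ v : (Fin n → ℂ) × ℂ → (Fin n → ℂ) × ℂ,
      (∀ q, fderiv ℂ (pairMap f g) q (v q) = w q ∨ v q = 0) ∧
      ∀ᶠ q in genericNhds p, fderiv ℂ (pairMap f g) q (v q) = w q := by
  have hlift (q) : ∃ v, (fderiv ℂ (pairMap f g) q v = w q ∨ v = 0) ∧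
      ((∃ u, fderiv ℂ (pairMap f g) q u = w q) → fderiv ℂ (pairMap f g) q v = w q) := by
    by_cases hu : ∃ u, fderiv ℂ (pairMap f g) q u = w q
    · exact hu.imp fun v hv => ⟨.inl hv, fun _ => hv⟩
    · exact ⟨0, .inr rfl, fun h => absurd h hu⟩
  choose v hv0 hv using hlift
  refine ⟨v, hv0, ?_⟩
  filter_upwards [eventually_generic_ne_zero (analyticAt_det_jacFull h) hdet,
    h.eventually_analyticAt.filter_mono genericNhds_le_nhds] with q hq hqan
  exact hv q (fderiv_pairMap_surjective hqan.differentiableAt hq (w q))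

end Coordinates

section ProductMaps

variable {E P X Y : Type*} [NormedAddCommGroup E] [NormedSpace ℂ E]
  [NormedAddCommGroup P] [NormedSpace ℂ P] [NormedAddCommGroup X] [NormedSpace ℂ X]
  [NormedAddCommGroup Y] [NormedSpace ℂ Y]

theorem fderiv_comp_prodMap {K : X × Y → ℂ} {H : E → X} {T : P → Y} {y : E × P}
    (hH : DifferentiableAt ℂ H y.1) (hT : DifferentiableAt ℂ T y.2)
    (hK : DifferentiableAt ℂ K (Prod.map H T y)) (v : P) :
    fderiv ℂ (K ∘ Prod.map H T) y (0, v) =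
      fderiv ℂ K (Prod.map H T y) (0, fderiv ℂ T y.2 v) := by
  rw [(hK.hasFDerivAt.comp y (hH.hasFDerivAt.prodMap y hT.hasFDerivAt)).fderiv]
  simp

theorem analyticAt_prodMap {H : E → X} {T : P → Y} {y : E × P} (hH : AnalyticAt ℂ H y.1)
    (hT : AnalyticAt ℂ T y.2) : AnalyticAt ℂ (Prod.map H T) y :=
  (hH.comp analyticAt_fst).prod (hT.comp analyticAt_snd)

theorem eventually_comp_prodMap_eq_zero [CompleteSpace X] [CompleteSpace Y] {R : E × P → ℂ}
    {K : X × Y → ℂ} {H : E × ℂ → X} {T : P → Y} (hR : AnalyticAt ℂ R 0) (hR0 : R 0 = 0)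
    (hRnd : SegreNondeg R) (hK : AnalyticAt ℂ K 0) (hH : AnalyticAt ℂ H 0) (hH0 : H 0 = 0)
    (hT : AnalyticAt ℂ T 0) (hT0 : T 0 = 0)
    (hKR : ∀ᶠ x : E × P in 𝓝 0, K (H (x.1, R x), T x.2) = 0)
    {v : P → P} (hv : ∀ᶠ p in genericNhds 0, v p ≠ 0)
    (hKv : ∀ᶠ y : (E × ℂ) × P in 𝓝 0,
      fderiv ℂ K (Prod.map H T y) (0, fderiv ℂ T y.2 (v y.2)) = 0) :
    ∀ᶠ y : (E × ℂ) × P in 𝓝 0, K (H y.1, T y.2) = 0 := by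
  have hHT : AnalyticAt ℂ (Prod.map H T) 0 := analyticAt_prodMap hH hT
  have hHT0 : Prod.map H T 0 = 0 := Prod.ext hH0 hT0
  have hKHT : ∀ᶠ y in 𝓝 0, AnalyticAt ℂ K (Prod.map H T y) := by
    refine hHT.continuousAt.eventually ?_
    rw [hHT0]
    exact hK.eventually_analyticAt
  refine eventually_eq_zero_of_stationary (G := K ∘ Prod.map H T) hR hR0 hRnd
    (hK.comp_of_eq hHT hHT0) hKR hv ?_
  filter_upwards [hKv, hKHT, continuous_fst.continuousAt.eventually hH.eventually_analyticAt,
    continuous_snd.continuousAt.eventually hT.eventually_analyticAt] with y hvy hKy hHy hTy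
  rw [fderiv_comp_prodMap hHy.differentiableAt hTy.differentiableAt hKy.differentiableAt, hvy]

end ProductMaps

section Hypersurfaces

variable {Q Q' : (Fin n → ℂ) → (Fin n → ℂ) → ℂ → ℂ}

theorem IsNormalDF.analyticAt (hQ : IsNormalDF Q) : AnalyticAt ℂ ↿Q 0 := hQ.1.self_of_nhds

theorem IsNormalDF.apply_zero (hQ : IsNormalDF Q) : ↿Q 0 = 0 := hQ.2.self_of_nhds.1

theorem HolNondeg.segreNondeg (hM : HolNondeg Q) (hQ : AnalyticAt ℂ ↿Q 0) : SegreNondeg ↿Q := by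
  obtain ⟨-, A, -, hdet⟩ := hM
  refine segreNondeg_of_nondegDet_ne_zero hQ A (coordBasis n) fun h =>
    hdet (h.mono fun p hp => ?_)
  simpa [nondegDet, coordBasis_apply] using! hp

theorem exists_tangent_field_of_not_holNondeg (hQ : AnalyticAt ℂ ↿Q 0) (hM : ¬ HolNondeg Q) :
    ∃ v : (Fin n → ℂ) × ℂ → (Fin n → ℂ) × ℂ,
      (∀ᶠ p in 𝓝 0, v p ≠ 0) ∧ ∀ᶠ x in 𝓝 0, fderiv ℂ ↿Q x (0, v x.2) = 0 := by
  refine exists_tangent_field_of_nondegDet_eq_zero hQ (coordBasis n) fun A => ?_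
  by_contra hdet
  refine hM ⟨∑ j, ∑ i, A j i, A,
    fun j => Finset.single_le_sum (f := fun j => ∑ i, A j i) (fun _ _ => Nat.zero_le _)
      (Finset.mem_univ j),
    fun h => hdet (h.mono fun p hp => ?_)⟩
  simpa [nondegDet, coordBasis_apply] using! hp

/-- The defining function `w - Q (z, χ, τ)` of the complexification `ℳ`, at the point
`((z, w), (χ, τ))`. -/
def complexifiedDF (Q : (Fin n → ℂ) → (Fin n → ℂ) → ℂ → ℂ)
    (y : ((Fin n → ℂ) × ℂ) × ((Fin n → ℂ) × ℂ)) : ℂ :=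
  y.1.2 - Q y.1.1 y.2.1 y.2.2

theorem analyticAt_complexifiedDF {y : ((Fin n → ℂ) × ℂ) × ((Fin n → ℂ) × ℂ)}
    (hQ : AnalyticAt ℂ ↿Q (y.1.1, y.2)) : AnalyticAt ℂ (complexifiedDF Q) y :=
  (analyticAt_snd.comp analyticAt_fst).sub <|
    hQ.comp (f := fun y : ((Fin n → ℂ) × ℂ) × ((Fin n → ℂ) × ℂ) => (y.1.1, y.2))
      ((analyticAt_fst.comp analyticAt_fst).prod analyticAt_snd)

theorem fderiv_complexifiedDF {y : ((Fin n → ℂ) × ℂ) × ((Fin n → ℂ) × ℂ)}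
    (hQ : AnalyticAt ℂ ↿Q (y.1.1, y.2)) (v : (Fin n → ℂ) × ℂ) :
    fderiv ℂ (complexifiedDF Q) y (0, v) = -fderiv ℂ ↿Q (y.1.1, y.2) (0, v) := by
  have hslice : fderiv ℂ (fun p => complexifiedDF Q (y.1, p)) y.2 =
      -fderiv ℂ (fun p => ↿Q (y.1.1, p)) y.2 :=
    fderiv_const_sub (f := fun p => ↿Q (y.1.1, p)) y.1.2
  rw [← fderiv_slice_right (analyticAt_complexifiedDF hQ).differentiableAt, hslice,
    ← fderiv_slice_right hQ.differentiableAt]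
  rfl

theorem IsNormalDF.analyticAt_conj (hQ : IsNormalDF Q) : AnalyticAt ℂ ↿(QBar Q) 0 :=
  analyticAt_star_star (f := ↿Q) (by rw [star_zero]; exact hQ.analyticAt)

theorem IsNormalDF.conj_apply_zero (hQ : IsNormalDF Q) : ↿(QBar Q) 0 = 0 := by
  have hstar : ↿(QBar Q) 0 = star (↿Q (star 0)) := rfl
  rw [hstar, star_zero, hQ.apply_zero, star_zero]

end Hypersurfaces

section SegreMaps

variable {Q Q' : (Fin n → ℂ) → (Fin n → ℂ) → ℂ → ℂ} {f ft : (Fin n → ℂ) → ℂ → Fin n → ℂ}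
  {g gt : (Fin n → ℂ) → ℂ → ℂ}

namespace IsHSPM

theorem analyticAt_left (hH : IsHSPM Q Q' f g ft gt) : AnalyticAt ℂ (pairMap f g) 0 :=
  hH.1.self_of_nhds.prod hH.2.1.self_of_nhds

theorem analyticAt_right (hH : IsHSPM Q Q' f g ft gt) : AnalyticAt ℂ (pairMap ft gt) 0 :=
  hH.2.2.1.self_of_nhds.prod hH.2.2.2.1.self_of_nhds

theorem left_zero (hH : IsHSPM Q Q' f g ft gt) : pairMap f g 0 = 0 :=
  Prod.ext hH.2.2.2.2.1 hH.2.2.2.2.2.1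

theorem right_zero (hH : IsHSPM Q Q' f g ft gt) : pairMap ft gt 0 = 0 :=
  Prod.ext hH.2.2.2.2.2.2.1 hH.2.2.2.2.2.2.2.1

theorem tendsto_left (hH : IsHSPM Q Q' f g ft gt) : Tendsto (pairMap f g) (𝓝 0) (𝓝 0) := by
  simpa [ContinuousAt, hH.left_zero] using hH.analyticAt_left.continuousAt

theorem tendsto_right (hH : IsHSPM Q Q' f g ft gt) : Tendsto (pairMap ft gt) (𝓝 0) (𝓝 0) := by
  simpa [ContinuousAt, hH.right_zero] using hH.analyticAt_right.continuousAt

theorem eventually_complexifiedDF_graph (hH : IsHSPM Q Q' f g ft gt) :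
    ∀ᶠ x in 𝓝 0, complexifiedDF Q' (pairMap f g (x.1, ↿Q x), pairMap ft gt x.2) = 0 :=
  hH.2.2.2.2.2.2.2.2.mono fun _ hx => sub_eq_zero.2 hx

theorem eventually_complexifiedDF_conj_graph (hH : IsHSPM Q Q' f g ft gt)
    (hQ : IsRealNormalDF Q) : ∀ᶠ x in 𝓝 0,
      complexifiedDF Q' (pairMap f g x.2, pairMap ft gt (x.1, ↿(QBar Q) x)) = 0 := by
  have hreal : Tendsto (fun x : (Fin n → ℂ) × (Fin n → ℂ) × ℂ => (x.2.1, x.1, x.2.2))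
      (𝓝 0) (𝓝 0) := Continuous.tendsto' (by fun_prop) _ _ rfl
  have hconj : Tendsto (fun x : (Fin n → ℂ) × (Fin n → ℂ) × ℂ => (x.2.1, x.1, ↿(QBar Q) x))
      (𝓝 0) (𝓝 0) :=
    .prodMk_nhds (Continuous.tendsto' (by fun_prop) _ _ rfl) <|
      .prodMk_nhds (continuous_fst.tendsto _) (by
        simpa [ContinuousAt, hQ.1.conj_apply_zero] using hQ.1.analyticAt_conj.continuousAt)
  filter_upwards [hreal.eventually hQ.2, hconj.eventually hH.eventually_complexifiedDF_graph]
    with x hx hHx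
  have hQx : ↿Q (x.2.1, x.1, ↿(QBar Q) x) = x.2.2 := hx
  rwa [hQx] at hHx

end IsHSPM

/-- The map `(f, g, f̃, g̃)` sends a full neighborhood of `0` in `ℂ²ⁿ⁺²`, and not only of `0` in
`ℳ`, into the complexification `ℳ'`. -/
def MapsNhdsInto (Q' : (Fin n → ℂ) → (Fin n → ℂ) → ℂ → ℂ) (f : (Fin n → ℂ) → ℂ → Fin n → ℂ)
    (g : (Fin n → ℂ) → ℂ → ℂ) (ft : (Fin n → ℂ) → ℂ → Fin n → ℂ) (gt : (Fin n → ℂ) → ℂ → ℂ) :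
    Prop :=
  ∀ᶠ y : ((Fin n → ℂ) × ℂ) × ((Fin n → ℂ) × ℂ) in 𝓝 0,
    complexifiedDF Q' (pairMap f g y.1, pairMap ft gt y.2) = 0

theorem mapsNhdsInto_of_det_right_eq_zero (hQ : IsNormalDF Q) (hQ' : IsNormalDF Q')
    (hM : HolNondeg Q) (hH : IsHSPM Q Q' f g ft gt)
    (hdet : ∀ᶠ p in 𝓝 0, (jacFull ft gt p).det = 0) : MapsNhdsInto Q' f g ft gt := by
  obtain ⟨v, hv⟩ := exists_kernel_field hH.analyticAt_right hdet
  refine eventually_comp_prodMap_eq_zero hQ.analyticAt hQ.apply_zero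
    (hM.segreNondeg hQ.analyticAt) (analyticAt_complexifiedDF hQ'.analyticAt) hH.analyticAt_left
    hH.left_zero hH.analyticAt_right hH.right_zero hH.eventually_complexifiedDF_graph
    ((hv.mono fun _ hp => hp.1).filter_mono genericNhds_le_nhds) ?_
  filter_upwards [continuous_snd.continuousAt.eventually hv] with y hy
  rw [hy.2, ← Prod.zero_eq_mk, map_zero]

theorem mapsNhdsInto_of_det_left_eq_zero (hQ : IsRealNormalDF Q) (hQ' : IsNormalDF Q')
    (hM : HolNondeg Q) (hH : IsHSPM Q Q' f g ft gt)
    (hdet : ∀ᶠ p in 𝓝 0, (jacFull f g p).det = 0) : MapsNhdsInto Q' f g ft gt := by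
  obtain ⟨v, hv⟩ := exists_kernel_field hH.analyticAt_left hdet
  have hK : AnalyticAt ℂ (complexifiedDF Q') 0 := analyticAt_complexifiedDF hQ'.analyticAt
  have hswap : ∀ᶠ y : ((Fin n → ℂ) × ℂ) × ((Fin n → ℂ) × ℂ) in 𝓝 0,
      complexifiedDF Q' (pairMap f g y.2, pairMap ft gt y.1) = 0 := by
    refine eventually_comp_prodMap_eq_zero (K := complexifiedDF Q' ∘ Prod.swap) hQ.1.analyticAt_conj
      hQ.1.conj_apply_zero ((hM.segreNondeg hQ.1.analyticAt).star_star hQ.1.analyticAt)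
      (hK.comp_of_eq (analyticAt_snd.prod analyticAt_fst) rfl) hH.analyticAt_right hH.right_zero
      hH.analyticAt_left hH.left_zero (hH.eventually_complexifiedDF_conj_graph hQ)
      ((hv.mono fun _ hp => hp.1).filter_mono genericNhds_le_nhds) ?_
    filter_upwards [continuous_snd.continuousAt.eventually hv] with y hy
    rw [hy.2, ← Prod.zero_eq_mk, map_zero]
  exact (continuous_swap.tendsto 0).eventually hswap

theorem mapsNhdsInto_of_not_holNondeg (hQ : IsNormalDF Q) (hQ' : IsNormalDF Q')
    (hM : HolNondeg Q) (hM' : ¬ HolNondeg Q') (hH : IsHSPM Q Q' f g ft gt)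
    (hdet : ∃ᶠ p in 𝓝 0, (jacFull ft gt p).det ≠ 0) : MapsNhdsInto Q' f g ft gt := by
  obtain ⟨v', hv'0, hv'⟩ := exists_tangent_field_of_not_holNondeg hQ'.analyticAt hM'
  obtain ⟨v, hv, hvgen⟩ := exists_lifted_field hH.analyticAt_right hdet (v' ∘ pairMap ft gt)
  refine eventually_comp_prodMap_eq_zero (v := v) hQ.analyticAt hQ.apply_zero
    (hM.segreNondeg hQ.analyticAt) (analyticAt_complexifiedDF hQ'.analyticAt) hH.analyticAt_left
    hH.left_zero hH.analyticAt_right hH.right_zero hH.eventually_complexifiedDF_graph ?_ ?_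
  · filter_upwards [hvgen, (hH.tendsto_right.eventually hv'0).filter_mono genericNhds_le_nhds]
      with p hvp hv'p hv0
    rw [hv0, map_zero] at hvp
    exact hv'p hvp.symm
  · have hprod : Tendsto (fun y : ((Fin n → ℂ) × ℂ) × ((Fin n → ℂ) × ℂ) =>
        ((pairMap f g y.1).1, pairMap ft gt y.2)) (𝓝 0) (𝓝 0) :=
      .prodMk_nhds
        (((continuous_fst.tendsto 0).comp hH.tendsto_left).comp (continuous_fst.tendsto 0))
        (hH.tendsto_right.comp (continuous_snd.tendsto 0))
    filter_upwards [hprod.eventually (hQ'.analyticAt.eventually_analyticAt.and hv')]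
      with y ⟨hQ'y, hv'y⟩
    rcases hv y.2 with hvy | hvy
    · rw [hvy, fderiv_complexifiedDF hQ'y]
      exact neg_eq_zero.2 hv'y
    · rw [hvy, map_zero, ← Prod.zero_eq_mk, map_zero]

theorem MapsNhdsInto.transversallyNull (h : MapsNhdsInto Q' f g ft gt) (hQ' : IsNormalDF Q')
    (hH : IsHSPM Q Q' f g ft gt) : TransversallyNull g gt := by
  constructor
  · have hslice := (Continuous.prodMk_left (0 : (Fin n → ℂ) × ℂ)).continuousAt.eventually h
    have hnormal : Tendsto (fun q => ((pairMap f g q).1, (0 : (Fin n → ℂ) × ℂ))) (𝓝 0) (𝓝 0) :=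
      ((continuous_fst.tendsto 0).comp hH.tendsto_left).prodMk_nhds tendsto_const_nhds
    filter_upwards [hslice, hnormal.eventually hQ'.2] with q hq hnq
    rw [hH.right_zero] at hq
    exact (sub_eq_zero.1 hq).trans hnq.2
  · have hslice := (Continuous.prodMk_right (0 : (Fin n → ℂ) × ℂ)).continuousAt.eventually h
    have hnormal : Tendsto (fun p => ((0 : Fin n → ℂ), pairMap ft gt p)) (𝓝 0) (𝓝 0) :=
      tendsto_const_nhds.prodMk_nhds hH.tendsto_right
    filter_upwards [hslice, hnormal.eventually hQ'.2] with p hp hnp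
    rw [hH.left_zero] at hp
    exact hnp.1.symm.trans (sub_eq_zero.1 hp).symm

theorem MapsNhdsInto.eventually_eq_zero (h : MapsNhdsInto Q' f g ft gt)
    (hnull : TransversallyNull g gt) :
    ∀ᶠ y : ((Fin n → ℂ) × ℂ) × ((Fin n → ℂ) × ℂ) in 𝓝 0,
      Q' (f y.1.1 y.1.2) (ft y.2.1 y.2.2) 0 = 0 := by
  filter_upwards [h, (continuous_fst.tendsto 0).eventually hnull.1,
    (continuous_snd.tendsto 0).eventually hnull.2] with y hy hg hgt
  simpa [complexifiedDF, pairMap, hg, hgt] using hy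

theorem exists_det_jacFull_ne_zero (hQ : IsNormalDF Q) (hf : AnalyticAt ℂ (pairMap f g) 0)
    (hft : AnalyticAt ℂ (pairMap ft gt) 0) (hdet : ∃ᶠ q in 𝓝 0, (jacFull f g q).det ≠ 0)
    (hdett : ∃ᶠ p in 𝓝 0, (jacFull ft gt p).det ≠ 0) :
    ∃ x, (jacFull f g (x.1, ↿Q x)).det ≠ 0 ∧ (jacFull ft gt x.2).det ≠ 0 := by
  have hgraph : Tendsto (fun x : (Fin n → ℂ) × (Fin n → ℂ) × ℂ => (x.1, ↿Q x))
      (genericNhds 0) (genericNhds 0) := by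
    have hσ : Tendsto (fun q : (Fin n → ℂ) × ℂ => (q.1, (0 : Fin n → ℂ), q.2)) (𝓝 0) (𝓝 0) :=
      Continuous.tendsto' (by fun_prop) _ _ rfl
    have hzero : ((0 : (Fin n → ℂ) × (Fin n → ℂ) × ℂ).1, ↿Q 0) = 0 := Prod.ext rfl hQ.apply_zero
    have himage := tendsto_genericNhds (analyticAt_fst.prod hQ.analyticAt) (by rwa [hzero])
      (by rw [hzero]; exact (hσ.eventually hQ.2).mono fun q hq => Prod.ext rfl hq.2)
    rwa [hzero] at himage
  have hsnd : Tendsto Prod.snd (genericNhds (0 : (Fin n → ℂ) × (Fin n → ℂ) × ℂ)) (genericNhds 0) :=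
    tendsto_snd_genericNhds
  exact ((hgraph.eventually (eventually_generic_ne_zero (analyticAt_det_jacFull hf) hdet)).and
    (hsnd.eventually (eventually_generic_ne_zero (analyticAt_det_jacFull hft) hdett))).exists

end SegreMaps

theorem statement1_general {Q Q' : (Fin n → ℂ) → (Fin n → ℂ) → ℂ → ℂ}
    (hQ : IsRealNormalDF Q) (hQ' : IsNormalDF Q') (hM : HolNondeg Q)
    {f ft : (Fin n → ℂ) → ℂ → Fin n → ℂ} {g gt : (Fin n → ℂ) → ℂ → ℂ}
    (hH : IsHSPM Q Q' f g ft gt) :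
    (TransversallyNull g gt ∧
      ∀ᶠ p in 𝓝 (0 : ((Fin n → ℂ) × ℂ) × ((Fin n → ℂ) × ℂ)),
        Q' (f p.1.1 p.1.2) (ft p.2.1 p.2.2) 0 = 0) ∨
    ((∃ (z₀ : Fin n → ℂ) (w₀ : ℂ) (χ₀ : Fin n → ℂ) (τ₀ : ℂ),
        w₀ = Q z₀ χ₀ τ₀ ∧
        (jacFull f g (z₀, w₀)).det ≠ 0 ∧ (jacFull ft gt (χ₀, τ₀)).det ≠ 0) ∧
      HolNondeg Q') := by
  by_cases hinto : MapsNhdsInto Q' f g ft gt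
  · have hnull := hinto.transversallyNull hQ' hH
    exact .inl ⟨hnull, hinto.eventually_eq_zero hnull⟩
  have hdet : ∃ᶠ q in 𝓝 0, (jacFull f g q).det ≠ 0 := fun h =>
    hinto (mapsNhdsInto_of_det_left_eq_zero hQ hQ' hM hH (h.mono fun _ => not_not.1))
  have hdett : ∃ᶠ p in 𝓝 0, (jacFull ft gt p).det ≠ 0 := fun h =>
    hinto (mapsNhdsInto_of_det_right_eq_zero hQ.1 hQ' hM hH (h.mono fun _ => not_not.1))
  have hM' : HolNondeg Q' := by_contra fun hM' =>
    hinto (mapsNhdsInto_of_not_holNondeg hQ.1 hQ' hM hM' hH hdett)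
  obtain ⟨x, hx, hxt⟩ :=
    exists_det_jacFull_ne_zero hQ.1 hH.analyticAt_left hH.analyticAt_right hdet hdett
  exact .inr ⟨⟨x.1, ↿Q x, x.2.1, x.2.2, rfl, hx, hxt⟩, hM'⟩

/-- Theorem 1.2: if `M` is holomorphically nondegenerate at `0`, then either
`ℋ` is transversally null with `Q'(f, f̃, 0) ≡ 0`, or `ℋ` is a biholomorphism near some point
of `ℳ` and `M'` is holomorphically nondegenerate at `0`. -/
theorem statement1 (n : ℕ) (hn : 1 ≤ n)
    (Q Q' : (Fin n → ℂ) → (Fin n → ℂ) → ℂ → ℂ)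
    (hQ : IsRealNormalDF Q) (hQ' : IsRealNormalDF Q')
    (hM : HolNondeg Q)
    (f ft : (Fin n → ℂ) → ℂ → Fin n → ℂ) (g gt : (Fin n → ℂ) → ℂ → ℂ)
    (hH : IsHSPM Q Q' f g ft gt) :
    (TransversallyNull g gt ∧
      ∀ᶠ p in 𝓝 (0 : ((Fin n → ℂ) × ℂ) × ((Fin n → ℂ) × ℂ)),
        Q' (f p.1.1 p.1.2) (ft p.2.1 p.2.2) 0 = 0) ∨
    ((∃ (z₀ : Fin n → ℂ) (w₀ : ℂ) (χ₀ : Fin n → ℂ) (τ₀ : ℂ),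
        w₀ = Q z₀ χ₀ τ₀ ∧
        (jacFull f g (z₀, w₀)).det ≠ 0 ∧ (jacFull ft gt (χ₀, τ₀)).det ≠ 0) ∧
      HolNondeg Q') :=
  statement1_general hQ hQ'.1 hM hH

end HSPMpaper
end
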